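/- Suppose L is a metric flag labeled triangulation of the 2-sphere. Let D be a Seifert subcomplex of L and let C ⊆ D be a Euclidean 4-circuit with vertices s₀, s₁, s₂, s₃ in cyclic order. If v is a vertex of L joined to both opposite corners s₀ and s₂ by edges of L labeled 2, then v is a vertex of D. -/

import Mathlib

open Geometry

/-- The ambient space for our simplicial complexes. -/
abbrev E3 : Type := EuclideanSpace ℝ (Fin 3)

noncomputable instance : DecidableEq E3 := Classical.decEq _

namespace CoxOrb

variable (L : SimplicialComplex ℝ E3) (m : E3 → E3 → ℕ)

/-- `L` is a labeled triangulation of the 2-sphere with edge labeling `m`: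
`L` is finite, its underlying space is homeomorphic to the 2-sphere, and `m`
is symmetric with `m s t ≥ 2` on every edge `{s, t}` of `L`. -/
structure IsLabeledS2 : Prop where
  finite : L.faces.Finite
  sphere : Nonempty (L.space ≃ₜ (Metric.sphere (0 : E3) 1 : Set E3))
  symm : ∀ s t : E3, m s t = m t s
  two_le : ∀ s t : E3, s ≠ t → ({s, t} : Finset E3) ∈ L.faces → 2 ≤ m s t

/-- `L` with labeling `m` is metric flag: three pairwise-joined vertices span a
2-simplex iff the corresponding angle sum `π/m_st + π/m_tu + π/m_us` exceeds `π`. -/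
def MetricFlag : Prop :=
  ∀ s t u : E3, s ≠ t → t ≠ u → s ≠ u →
    ({s, t} : Finset E3) ∈ L.faces → ({t, u} : Finset E3) ∈ L.faces →
    ({s, u} : Finset E3) ∈ L.faces →
    (({s, t, u} : Finset E3) ∈ L.faces ↔
      1 / (m s t : ℝ) + 1 / (m t u : ℝ) + 1 / (m u s : ℝ) > 1)

/-- The link of a vertex `s`, as a set of faces of `L`. -/
def link (s : E3) : Set (Finset E3) :=
  {F | F ∈ L.faces ∧ s ∉ F ∧ insert s F ∈ L.faces}

/-- The closed star of a vertex `s`: all faces of `L` contained in some face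
containing `s`. -/
def star (s : E3) : Set (Finset E3) :=
  {F | F ∈ L.faces ∧ ∃ G ∈ L.faces, s ∈ G ∧ F ⊆ G}

/-- The vertices of the link of `s`. -/
def linkVerts (s : E3) : Set E3 :=
  {v | v ≠ s ∧ ({s, v} : Finset E3) ∈ L.faces}

/-- A set of faces `A` is a full subcomplex of `L`: every face of `L` all of
whose vertices are vertices of `A` belongs to `A`. -/
def IsFullSubcomplex (A : Set (Finset E3)) : Prop :=
  A ⊆ L.faces ∧ ∀ F ∈ L.faces, (∀ v ∈ F, ({v} : Finset E3) ∈ A) → F ∈ A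

/-- `s` is a 3-Euclidean vertex of `L`: it has valence three and the labels on
the three edges of its link have reciprocals summing to one. -/
def IsThreeEuclidean (s : E3) : Prop :=
  ({s} : Finset E3) ∈ L.faces ∧
  ∃ s₀ s₁ s₂ : E3, s₀ ≠ s₁ ∧ s₁ ≠ s₂ ∧ s₀ ≠ s₂ ∧
    linkVerts L s = {s₀, s₁, s₂} ∧
    1 / (m s₀ s₁ : ℝ) + 1 / (m s₁ s₂ : ℝ) + 1 / (m s₂ s₀ : ℝ) = 1

/-- `s` is a 4-Euclidean vertex of `L`: it has valence four, its link is the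
4-circuit on `v 0, v 1, v 2, v 3` (in cyclic order), and the labels on the
edges of the link are all `2`. -/
def IsFourEuclidean (s : E3) : Prop :=
  ({s} : Finset E3) ∈ L.faces ∧
  ∃ v : Fin 4 → E3, Function.Injective v ∧
    linkVerts L s = {v 0, v 1, v 2, v 3} ∧
    (∀ i : Fin 4, ({s, v i, v (i + 1)} : Finset E3) ∈ L.faces) ∧
    (∀ i : Fin 4, m (v i) (v (i + 1)) = 2)

/-- `L` is the boundary complex of a 3-simplex: four pairwise-joined vertices
spanning four 2-simplices. -/
def IsBoundaryOfThreeSimplex : Prop :=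
  ∃ a b c d : E3, a ≠ b ∧ a ≠ c ∧ a ≠ d ∧ b ≠ c ∧ b ≠ d ∧ c ≠ d ∧
    (∀ v : E3, ({v} : Finset E3) ∈ L.faces ↔ v = a ∨ v = b ∨ v = c ∨ v = d) ∧
    ({a, b, c} : Finset E3) ∈ L.faces ∧ ({a, b, d} : Finset E3) ∈ L.faces ∧
    ({a, c, d} : Finset E3) ∈ L.faces ∧ ({b, c, d} : Finset E3) ∈ L.faces

/-- `L` is the suspension of a 3-gon. -/
def IsSuspensionOfThreeGon : Prop :=
  ∃ t t' s₀ s₁ s₂ : E3, [t, t', s₀, s₁, s₂].Pairwise (· ≠ ·) ∧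
    (∀ v : E3, ({v} : Finset E3) ∈ L.faces ↔ v = t ∨ v = t' ∨ v = s₀ ∨ v = s₁ ∨ v = s₂) ∧
    ({s₀, s₁} : Finset E3) ∈ L.faces ∧ ({s₁, s₂} : Finset E3) ∈ L.faces ∧
    ({s₀, s₂} : Finset E3) ∈ L.faces ∧
    ({t, s₀} : Finset E3) ∈ L.faces ∧ ({t, s₁} : Finset E3) ∈ L.faces ∧
    ({t, s₂} : Finset E3) ∈ L.faces ∧
    ({t', s₀} : Finset E3) ∈ L.faces ∧ ({t', s₁} : Finset E3) ∈ L.faces ∧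
    ({t', s₂} : Finset E3) ∈ L.faces ∧
    ({t, t'} : Finset E3) ∉ L.faces

/-- The simplicial join of the subcomplex `Z` with the two points `t, t'`. -/
def joinSusp (Z : Set (Finset E3)) (t t' : E3) : Set (Finset E3) :=
  Z ∪ {{t}, {t'}} ∪ ((fun F => insert t F) '' Z) ∪ ((fun F => insert t' F) '' Z)

/-- `T` is the right-angled suspension in `L` of the subcomplex `Z` with
suspension points `t, t'` (not joined by an edge of `T`): every edge from a
suspension point to a vertex of `Z` is labeled `2`. -/
structure IsRASuspData (T Z : Set (Finset E3)) (t t' : E3) : Prop where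
  subset : T ⊆ L.faces
  zsubset : Z ⊆ L.faces
  zdown : ∀ F ∈ Z, ∀ G : Finset E3, G ⊆ F → G.Nonempty → G ∈ Z
  znonempty : Z.Nonempty
  tne : t ≠ t'
  t_notin : ∀ F ∈ Z, t ∉ F
  t'_notin : ∀ F ∈ Z, t' ∉ F
  labels : ∀ v : E3, ({v} : Finset E3) ∈ Z → m t v = 2 ∧ m t' v = 2
  eq : T = joinSusp Z t t'

/-- `T` is a right-angled suspension in `L`. -/
def IsRASusp (T : Set (Finset E3)) : Prop :=
  ∃ Z t t', IsRASuspData L m T Z t t'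

/-- The base `Z` of the suspension is neither a single vertex nor a single
edge, so that the suspension is infinite. -/
def InfiniteBase (Z : Set (Finset E3)) : Prop :=
  (¬ ∃ v : E3, Z = {({v} : Finset E3)}) ∧
  (¬ ∃ u v : E3, u ≠ v ∧ Z = {({u} : Finset E3), ({v} : Finset E3), ({u, v} : Finset E3)})

/-- `T` is an infinite, maximal right-angled suspension in `L`: it is an
RA-suspension of a full subcomplex which is neither a vertex nor an edge, and
`T` is not properly contained in another RA-suspension. -/
def IsInfMaxRASusp (T : Set (Finset E3)) : Prop :=
  (∃ Z t t', IsRASuspData L m T Z t t' ∧ InfiniteBase Z ∧ IsFullSubcomplex L Z) ∧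
  ∀ T', IsRASusp L m T' → T ⊆ T' → T = T'

/-- `v 0, v 1, v 2, v 3` (in cyclic order) form a Euclidean 4-circuit of `L`:
all four edge labels are `2` and the circuit is not the boundary of the union
of two 2-simplices of `L` sharing an edge. -/
def IsEuclidean4Circuit (v : Fin 4 → E3) : Prop :=
  Function.Injective v ∧
  (∀ i : Fin 4, ({v i, v (i + 1)} : Finset E3) ∈ L.faces) ∧
  (∀ i : Fin 4, m (v i) (v (i + 1)) = 2) ∧
  ¬ ((({v 0, v 1, v 2} : Finset E3) ∈ L.faces ∧ ({v 0, v 2, v 3} : Finset E3) ∈ L.faces) ∨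
     (({v 1, v 2, v 3} : Finset E3) ∈ L.faces ∧ ({v 0, v 1, v 3} : Finset E3) ∈ L.faces))

/-- The subcomplex consisting of the vertices and edges of the 4-circuit `v`. -/
def circuitComplex (v : Fin 4 → E3) : Set (Finset E3) :=
  {F | (∃ i : Fin 4, F = {v i}) ∨ (∃ i : Fin 4, F = {v i, v (i + 1)})}

/-- `T` is the right-angled cone on a Euclidean 4-circuit: the closed star of a
vertex `c` of valence four whose link is a Euclidean 4-circuit, all four edges
containing `c` being labeled `2`. -/
def IsRAConeOn4Circuit (T : Set (Finset E3)) : Prop :=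
  ∃ (c : E3) (v : Fin 4 → E3), IsEuclidean4Circuit L m v ∧
    linkVerts L c = {v 0, v 1, v 2, v 3} ∧
    (∀ i : Fin 4, ({c, v i, v (i + 1)} : Finset E3) ∈ L.faces) ∧
    (∀ i : Fin 4, m c (v i) = 2) ∧
    T = star L c

/-- The generating relation for Seifert subcomplexes: two infinite, maximal
RA-suspensions whose intersection is a Euclidean 4-circuit. -/
def SeifertRel (S S' : Set (Finset E3)) : Prop :=
  IsInfMaxRASusp L m S ∧ IsInfMaxRASusp L m S' ∧
  ∃ v : Fin 4 → E3, IsEuclidean4Circuit L m v ∧ S ∩ S' = circuitComplex v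

/-- `D` is a Seifert subcomplex of `L`: the union of the members of an
equivalence class of infinite, maximal RA-suspensions under the equivalence
relation generated by `SeifertRel`. -/
def IsSeifertSubcomplex (D : Set (Finset E3)) : Prop :=
  ∃ S₀, IsInfMaxRASusp L m S₀ ∧
    D = ⋃₀ {S | IsInfMaxRASusp L m S ∧ Relation.EqvGen (SeifertRel L m) S₀ S}

end CoxOrb

open CoxOrb

section Helpers



namespace K33

theorem exists_log {A : Type*} [TopologicalSpace A] [SimplyConnectedSpace A]
    [LocallyPathConnectedSpace A] (f : A → ℂ) (hf : Continuous f) (h0 : ∀ a, f a ≠ 0) :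
    ∃ G : A → ℂ, Continuous G ∧ ∀ a, Complex.exp (G a) = f a := by
  obtain ⟨a₀⟩ : Nonempty A := inferInstance
  obtain ⟨F, ⟨-, hF⟩, -⟩ := Complex.isCoveringMapOn_exp.existsUnique_continuousMap_lifts
    (⟨f, hf⟩ : C(A, ℂ)) (a₀ := a₀) (Complex.exp_log (h0 a₀)) (fun x => h0 x)
  exact ⟨F, F.continuous, fun a => congrFun hF a⟩

theorem exp_unique (G H : ℝ → ℂ) (hG : Continuous G) (hH : Continuous H) (h0 : G 0 = H 0)
    (h : ∀ s, Complex.exp (G s) = Complex.exp (H s)) : G = H := by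
  refine Complex.isCoveringMap_exp.eq_of_comp_eq hG hH ?_ 0 h0
  funext s
  exact Subtype.ext (h s)

noncomputable def Delta (g : ℝ → ℂ) : ℂ :=
  open Classical in
  if h : ∃ G : ℝ → ℂ, Continuous G ∧ ∀ s, Complex.exp (G s) = g s then
    h.choose 1 - h.choose 0 else 0

theorem Delta_eq (g G : ℝ → ℂ) (c : ℂ) (hg : Continuous g) (hg0 : ∀ s, g s ≠ 0)
    (hG : Continuous G)
    (h : ∀ s, Complex.exp (G s) = c * g s) : Delta g = G 1 - G 0 := by
  have hex : ∃ G : ℝ → ℂ, Continuous G ∧ ∀ s, Complex.exp (G s) = g s := exists_log g hg hg0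
  unfold Delta
  rw [dif_pos hex]
  obtain ⟨hH, hHe⟩ := hex.choose_spec
  set H := hex.choose
  have key : G = fun s => H s + (G 0 - H 0) := by
    apply exp_unique _ _ hG (by fun_prop) (by ring)
    intro s
    rw [Complex.exp_add, Complex.exp_sub, h, h, hHe, hHe]
    field_simp [hg0 0]
  have := congrFun key 1
  rw [this]; ring

theorem exp_Delta (g : ℝ → ℂ) (hg : Continuous g) (hg0 : ∀ s, g s ≠ 0) :
    Complex.exp (Delta g) = g 1 / g 0 := by
  obtain ⟨G, hG, h⟩ := exists_log g hg hg0
  rw [Delta_eq g G 1 hg hg0 hG (by simpa using h), Complex.exp_sub, h, h]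

/-- square relation -/
theorem square (f g : ℝ → ℂ) (hf : Continuous f) (hg : Continuous g) (h : ∀ s s', f s ≠ g s') :
    Delta (fun s => f s - g 0) - Delta (fun s => g s - f 0)
      = Delta (fun s => f s - g 1) - Delta (fun s => g s - f 1) := by
  obtain ⟨G, hG, he⟩ := exists_log (fun x : ℝ × ℝ => f x.1 - g x.2) (by fun_prop)
    (fun x => sub_ne_zero.2 (h _ _))
  have e1 : ∀ y, Delta (fun s => f s - g y) = G (1, y) - G (0, y) := fun y =>
    Delta_eq _ (fun s => G (s, y)) 1 (by fun_prop) (fun s => sub_ne_zero.2 (h _ _))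
      (by fun_prop) (fun s => by simp [he])
  have e2 : ∀ y, Delta (fun s => g s - f y) = G (y, 1) - G (y, 0) := fun y =>
    Delta_eq _ (fun s => G (y, s)) (-1) (by fun_prop) (fun s => sub_ne_zero.2 (h _ _).symm)
      (by fun_prop) (fun s => by simp [he])
  rw [e1, e1, e2, e2]; ring

theorem nonplanar (p q : Fin 3 → ℂ) (γ : Fin 3 → Fin 3 → ℝ → ℂ)
    (hc : ∀ i j, Continuous (γ i j)) (h0 : ∀ i j, γ i j 0 = p i) (h1 : ∀ i j, γ i j 1 = q j)
    (hd : ∀ i i' j j', i ≠ i' → j ≠ j' → ∀ s s', γ i j s ≠ γ i' j' s') : False := by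
  have hsq : ∀ i i' j j', i ≠ i' → j ≠ j' →
      Delta (fun s => γ i j s - p i') - Delta (fun s => γ i' j' s - p i)
      = Delta (fun s => γ i j s - q j') - Delta (fun s => γ i' j' s - q j) := by
    intro i i' j j' hi hj
    have := square (γ i j) (γ i' j') (hc _ _) (hc _ _) (hd _ _ _ _ hi hj)
    simpa only [h0, h1] using this
  have hB : ∀ i j j', j ≠ j' → ∀ s, γ i j s - q j' ≠ 0 := by
    intro i j j' hj s
    rw [← h1 (i + 1) j']
    exact sub_ne_zero.2 (hd _ _ _ _ (by fin_cases i <;> decide) hj _ _)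
  have hBe : ∀ i j j', j ≠ j' → Complex.exp (Delta (fun s => γ i j s - q j'))
      = (q j - q j') / (p i - q j') := by
    intro i j j' hj
    have := exp_Delta (fun s => γ i j s - q j') (by have := hc i j; fun_prop) (hB i j j' hj)
    simpa only [h0, h1] using this
  have hq : ∀ j j', j ≠ j' → q j - q j' ≠ 0 := by
    intro j j' hj
    have := hB 0 j j' hj 1
    rwa [h1] at this
  have hpq : ∀ i j, p i - q j ≠ 0 := by
    intro i j
    have := hB i (j+1) j (by fin_cases j <;> decide) 0
    rwa [h0] at this
  have hterm : ∀ i j j', j ≠ j' → Complex.exp (Delta (fun s => γ i j s - q j')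
      - Delta (fun s => γ i j' s - q j)) = - ((p i - q j) / (p i - q j')) := by
    intro i j j' hj
    rw [Complex.exp_sub, hBe i j j' hj, hBe i j' j hj.symm]
    have := hq j j' hj
    have h2 := hq j' j hj.symm
    have := hpq i j
    have := hpq i j'
    field_simp
    ring
  have hrow : ∀ i, Complex.exp ((Delta (fun s => γ i 0 s - q 1) - Delta (fun s => γ i 1 s - q 0))
      + (Delta (fun s => γ i 1 s - q 2) - Delta (fun s => γ i 2 s - q 1))
      + (Delta (fun s => γ i 2 s - q 0) - Delta (fun s => γ i 0 s - q 2))) = -1 := by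
    intro i
    rw [Complex.exp_add, Complex.exp_add, hterm i 0 1 (by decide), hterm i 1 2 (by decide),
      hterm i 2 0 (by decide)]
    have := hpq i 0
    have := hpq i 1
    have := hpq i 2
    field_simp
  have htot := congrArg₂ (· * ·) (congrArg₂ (· * ·) (hrow 0) (hrow 1)) (hrow 2)
  simp only [← Complex.exp_add] at htot
  have hne : (1 : ℂ) ≠ -1 * -1 * -1 := by norm_num
  refine hne (Eq.trans (Complex.exp_zero.symm.trans (congrArg Complex.exp ?_)) htot)
  · have d01 : (0 : Fin 3) ≠ 1 := by decide
    have d02 : (0 : Fin 3) ≠ 2 := by decide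
    have d12 : (1 : Fin 3) ≠ 2 := by decide
    linear_combination (1/2 : ℂ) * (hsq 0 1 0 1 d01 d01 + hsq 1 0 0 1 d01.symm d01
      + hsq 0 2 0 1 d02 d01 + hsq 2 0 0 1 d02.symm d01
      + hsq 1 2 0 1 d12 d01 + hsq 2 1 0 1 d12.symm d01
      + hsq 0 1 1 2 d01 d12 + hsq 1 0 1 2 d01.symm d12
      + hsq 0 2 1 2 d02 d12 + hsq 2 0 1 2 d02.symm d12
      + hsq 1 2 1 2 d12 d12 + hsq 2 1 1 2 d12.symm d12
      + hsq 0 1 2 0 d01 d02.symm + hsq 1 0 2 0 d01.symm d02.symm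
      + hsq 0 2 2 0 d02 d02.symm + hsq 2 0 2 0 d02.symm d02.symm
      + hsq 1 2 2 0 d12 d02.symm + hsq 2 1 2 0 d12.symm d02.symm)

end K33

abbrev S2 : Set E3 := Metric.sphere (0 : E3) 1

theorem sphere_compl_pair (u v : S2) : IsPreconnected ({u, v}ᶜ : Set S2) := by
  have : Fact (Module.finrank ℝ E3 = 2 + 1) := ⟨by simp⟩
  set σ := stereographic' 2 u with hσ
  have hs : σ.source = {u}ᶜ := stereographic'_source u
  have ht : σ.target = Set.univ := stereographic'_target u
  have hpre : IsPreconnected ({σ v}ᶜ : Set (EuclideanSpace ℝ (Fin 2))) :=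
    (isConnected_compl_singleton_of_one_lt_rank (by rw [← Module.finrank_eq_rank]; simp) _).isPreconnected
  by_cases huv : v = u
  · subst huv
    have : ({v, v}ᶜ : Set S2) = σ.symm '' Set.univ := by
      rw [← ht, σ.symm_image_target_eq_source, hs]; simp
    rw [this]
    exact isPreconnected_univ.image _ (by rw [← ht]; exact σ.continuousOn_symm)
  · have : ({u, v}ᶜ : Set S2) = σ.symm '' {σ v}ᶜ := by
      ext y
      constructor
      · intro hy
        simp only [Set.mem_compl_iff, Set.mem_insert_iff, Set.mem_singleton_iff, not_or] at hy
        have hys : y ∈ σ.source := by rw [hs]; exact hy.1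
        have hvs : v ∈ σ.source := by rw [hs]; exact huv
        refine ⟨σ y, ?_, σ.left_inv hys⟩
        intro h
        exact hy.2 (σ.injOn hys hvs h)
      · rintro ⟨z, hz, rfl⟩
        have hzt : z ∈ σ.target := by rw [ht]; trivial
        have h1 : σ.symm z ∈ σ.source := σ.map_target hzt
        rw [hs] at h1
        simp only [Set.mem_compl_iff, Set.mem_insert_iff, Set.mem_singleton_iff, not_or]
        refine ⟨h1, fun h => hz ?_⟩
        rw [Set.mem_singleton_iff, ← h, σ.right_inv hzt]
    rw [this]
    exact hpre.image _ (σ.continuousOn_symm.mono (by rw [ht]; exact Set.subset_univ _))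

theorem space_compl_pair {X : Set E3} (h : X ≃ₜ S2) (u v : X) :
    IsPreconnected ({u, v}ᶜ : Set X) := by
  have := (sphere_compl_pair (h u) (h v)).image h.symm h.symm.continuous.continuousOn
  convert this using 1
  ext y
  simp only [Set.mem_compl_iff, Set.mem_insert_iff, Set.mem_singleton_iff, Set.mem_image]
  constructor
  · intro hy
    exact ⟨h y, by simpa using hy, by simp⟩
  · rintro ⟨z, hz, rfl⟩
    rintro (e | e) <;> apply hz <;> simp [← e]

theorem sphere_infinite : Infinite S2 := by
  have : Fact (Module.finrank ℝ E3 = 2 + 1) := ⟨by simp⟩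
  have hne : Nonempty S2 := (NormedSpace.sphere_nonempty.2 zero_le_one).to_subtype
  obtain ⟨u⟩ := hne
  set σ := stereographic' 2 u
  have ht : σ.target = Set.univ := stereographic'_target u
  refine Infinite.of_injective (fun z : EuclideanSpace ℝ (Fin 2) => σ.symm z) ?_
  intro a b hab
  exact σ.symm.injOn (by simp [ht]) (by simp [ht]) hab

theorem exists_missing {X : Set E3} (h : X ≃ₜ S2) (s : Set (E3 × E3)) (hs : s.Finite)
    (hsX : ∀ e ∈ s, segment ℝ e.1 e.2 ⊆ X) : ∃ x ∈ X, ∀ e ∈ s, x ∉ segment ℝ e.1 e.2 := by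
  by_contra hcon
  push Not at hcon
  have : CompactSpace X := h.symm.compactSpace
  have : Infinite X := by
    have := sphere_infinite
    exact Infinite.of_injective h.symm h.symm.injective
  have : Countable s := hs.countable.to_subtype
  have hsegcl : ∀ a b : E3, IsClosed (segment ℝ a b) := fun a b => by
    rw [segment_eq_image_lineMap]
    exact (isCompact_Icc.image AffineMap.lineMap_continuous).isClosed
  obtain ⟨⟨⟨a, b⟩, he⟩, hintr⟩ := nonempty_interior_of_iUnion_of_closed
    (f := fun e : s => (Subtype.val ⁻¹' segment ℝ e.1.1 e.1.2 : Set X))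
    (fun e => (hsegcl _ _).preimage continuous_subtype_val)
    (by
      ext x
      simp only [Set.mem_iUnion, Set.mem_univ, iff_true]
      obtain ⟨e, he, hx⟩ := hcon x.1 x.2
      exact ⟨⟨e, he⟩, hx⟩)
  obtain ⟨x, hx⟩ := hintr
  obtain ⟨U, hU, hUo, hxU⟩ := mem_interior.1 hx
  obtain ⟨O, hO, rfl⟩ := isOpen_induced_iff.1 hUo
  have hseg := hsX _ he
  simp only at hseg hU
  have hUseg : ∀ y ∈ X, y ∈ O → y ∈ segment ℝ a b := fun y hy hyO => hU (a := ⟨y, hy⟩) hyO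
  have hinX : ∀ t ∈ Set.Icc (0:ℝ) 1, AffineMap.lineMap a b t ∈ X := fun t ht => hseg (by
    rw [segment_eq_image_lineMap]; exact ⟨t, ht, rfl⟩)
  by_cases hab : a = b
  · subst hab
    simp only [segment_same, Set.mem_singleton_iff] at hUseg
    have hxa : x.1 = a := hUseg _ x.2 hxU
    -- `{x}` is open, hence clopen
    have hopen : IsOpen ({x} : Set X) := by
      have : ({x} : Set X) = Subtype.val ⁻¹' O := by
        ext y
        constructor
        · rintro rfl; exact hxU
        · intro hy; exact Subtype.ext ((hUseg _ y.2 hy).trans hxa.symm)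
      rw [this]; exact hUo
    obtain ⟨y, hy⟩ := exists_ne x
    obtain ⟨z, hz⟩ := Infinite.exists_notMem_finset ({x, y} : Finset X)
    simp only [Finset.mem_insert, Finset.mem_singleton, not_or] at hz
    have hp := space_compl_pair h y y
    have := hp _ _ hopen (isOpen_compl_singleton (x := x)) (by
      intro w _; by_cases hw : w = x <;> simp [hw]) ⟨x, by simp [hy.symm], rfl⟩
      ⟨z, by simpa using hz.2, hz.1⟩
    obtain ⟨w, -, hw1, hw2⟩ := this
    exact hw2 hw1
  · -- find a subinterval
    have hxs := hU hxU
    simp only [Set.mem_preimage] at hxs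
    rw [segment_eq_image_lineMap] at hxs
    obtain ⟨τ, hτ, hτx⟩ := hxs
    have hcont : Continuous (AffineMap.lineMap a b : ℝ → E3) := AffineMap.lineMap_continuous
    have hτO : τ ∈ (AffineMap.lineMap a b : ℝ → E3) ⁻¹' O := by
      rw [Set.mem_preimage, hτx]; exact hxU
    have hpo := hO.preimage hcont
    have hτc : τ ∈ closure (Set.Ioo (0:ℝ) 1) := by rw [closure_Ioo (by norm_num)]; exact hτ
    obtain ⟨σ, hσO, hσI⟩ := mem_closure_iff.1 hτc _ hpo hτO
    obtain ⟨l, u, ⟨hl, hu⟩, hlu⟩ := mem_nhds_iff_exists_Ioo_subset.1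
      ((hpo.inter isOpen_Ioo).mem_nhds ⟨hσO, hσI⟩)
    obtain ⟨r1, hr1⟩ := exists_between hl
    obtain ⟨r2, hr2⟩ := exists_between hu
    have hr1' := hlu ⟨hr1.1, hr1.2.trans hu⟩
    have hr2' := hlu ⟨hl.trans hr2.1, hr2.2⟩
    have hIcc : ∀ t ∈ Set.Icc r1 r2, AffineMap.lineMap a b t ∈ O := fun t ht =>
      (hlu ⟨hr1.1.trans_le ht.1, ht.2.trans_lt hr2.2⟩).1
    have h01 : ∀ t ∈ Set.Icc r1 r2, t ∈ Set.Icc (0:ℝ) 1 := fun t ht =>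
      ⟨hr1'.2.1.le.trans ht.1, ht.2.trans hr2'.2.2.le⟩
    have hr12 : r1 < r2 := hr1.2.trans hr2.1
    have hinj : Function.Injective (AffineMap.lineMap a b : ℝ → E3) :=
      AffineMap.lineMap_injective ℝ hab
    let ℓ : Set.Icc (0:ℝ) 1 → X := fun t => ⟨AffineMap.lineMap a b t.1, hinX t.1 t.2⟩
    have hpre := space_compl_pair h (ℓ ⟨r1, h01 _ ⟨le_rfl, hr12.le⟩⟩) (ℓ ⟨r2, h01 _ ⟨hr12.le, le_rfl⟩⟩)
    -- closed sets
    have hA : IsClosed (Subtype.val ⁻¹' ((AffineMap.lineMap a b : ℝ → E3) '' Set.Icc r1 r2) : Set X) :=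
      ((isCompact_Icc.image hcont).isClosed).preimage continuous_subtype_val
    have hB : IsClosed (Subtype.val ⁻¹' ((AffineMap.lineMap a b : ℝ → E3) '' (Set.Icc 0 r1) ∪
        (AffineMap.lineMap a b : ℝ → E3) '' (Set.Icc r2 1) ∪ Oᶜ) : Set X) :=
      ((((isCompact_Icc.image hcont).isClosed).union ((isCompact_Icc.image hcont).isClosed)).union
        hO.isClosed_compl).preimage continuous_subtype_val
    have := isPreconnected_closed_iff.1 hpre _ _ hA hB ?_ ?_ ?_
    · obtain ⟨w, hw0, ⟨t, ht, htw⟩, hw2⟩ := this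
      apply hw0
      have hwO : w.1 ∈ O := htw ▸ hIcc t ht
      have : t = r1 ∨ t = r2 := by
        rcases hw2 with (⟨t', ht', e⟩ | ⟨t', ht', e⟩) | hw2
        · left
          have := hinj (e.trans htw.symm); subst this
          exact le_antisymm ht'.2 ht.1
        · right
          have := hinj (e.trans htw.symm); subst this
          exact le_antisymm ht.2 ht'.1
        · exact absurd hwO hw2
      rcases this with rfl | rfl
      · left; exact Subtype.ext htw.symm
      · right; exact Subtype.ext htw.symm
    · intro w _
      by_cases hwO : w.1 ∈ O
      · have := hUseg _ w.2 hwO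
        rw [segment_eq_image_lineMap] at this
        obtain ⟨t, ht, htw⟩ := this
        rcases le_total t r1 with h1 | h1
        · right; left; left; exact ⟨t, ⟨ht.1, h1⟩, htw⟩
        · rcases le_total t r2 with h2 | h2
          · left; exact ⟨t, ⟨h1, h2⟩, htw⟩
          · right; left; right; exact ⟨t, ⟨h2, ht.2⟩, htw⟩
      · right; right; exact hwO
    · have hm : (r1 + r2) / 2 ∈ Set.Icc r1 r2 := ⟨by linarith, by linarith⟩
      refine ⟨ℓ ⟨_, h01 _ hm⟩, ?_, ⟨_, hm, rfl⟩⟩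
      rintro (e | e)
      · have := hinj (congrArg Subtype.val e); linarith
      · have := hinj (congrArg Subtype.val e); linarith
    · refine ⟨ℓ ⟨0, by simp⟩, ?_, Or.inl (Or.inl ⟨0, ⟨le_rfl, hr1'.2.1.le⟩, rfl⟩)⟩
      rintro (e | e)
      · have := hinj (congrArg Subtype.val e); simp only at this; linarith [hr1'.2.1]
      · have := hinj (congrArg Subtype.val e); simp only at this; linarith [hr2'.2.1]

theorem sphere_no_K33 {X : Set E3} (h : X ≃ₜ S2) (p q : Fin 3 → E3) (R : Fin 3 → Fin 3 → Set E3)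
    (hR : ∀ i j, R i j ⊆ X) (hj : ∀ i j, JoinedIn (R i j) (p i) (q j))
    (hd : ∀ i i' j j', i ≠ i' → j ≠ j' → Disjoint (R i j) (R i' j'))
    (x : E3) (hx : x ∈ X) (hxR : ∀ i j, x ∉ R i j) : False := by
  have : Fact (Module.finrank ℝ E3 = 2 + 1) := ⟨by simp⟩
  set σ := stereographic' 2 (h ⟨x, hx⟩)
  have hs : σ.source = {h ⟨x, hx⟩}ᶜ := stereographic'_source _
  let κ : EuclideanSpace ℝ (Fin 2) ≃ₗᵢ[ℝ] ℂ := Complex.orthonormalBasisOneI.repr.symm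
  let pt : ∀ i j, ℝ → X := fun i j t => ⟨(hj i j).somePath.extend t, hR i j (by
    have := (hj i j).somePath_mem
    exact this _)⟩
  have hmem : ∀ i j t, (pt i j t).1 ∈ R i j := fun i j t => (hj i j).somePath_mem _
  have hsrc : ∀ i j t, h (pt i j t) ∈ σ.source := by
    intro i j t
    rw [hs]
    intro e
    have := h.injective e
    exact hxR i j (by have h2 := hmem i j t; rw [this] at h2; exact h2)
  refine K33.nonplanar (fun i => κ (σ (h (pt i 0 0)))) (fun j => κ (σ (h (pt 0 j 1))))
    (fun i j t => κ (σ (h (pt i j t)))) ?_ ?_ ?_ ?_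
  · intro i j
    refine κ.continuous.comp (σ.continuousOn.comp_continuous (h.continuous.comp ?_) (hsrc i j))
    exact Continuous.subtype_mk (hj i j).somePath.continuous_extend _
  · intro i j; simp [pt]
  · intro i j; simp [pt]
  · intro i i' j j' hi hj' s s' e
    have e1 := h.injective (σ.injOn (hsrc _ _ _) (hsrc _ _ _) (κ.injective e))
    have h1 := hmem i j s
    rw [e1] at h1
    exact Set.disjoint_left.1 (hd i i' j j' hi hj') h1 (hmem i' j' s')

open Geometry CoxOrb

theorem joined_segment {R : Set E3} {a b : E3} (h : segment ℝ a b ⊆ R) : JoinedIn R a b :=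
  JoinedIn.mono ((convex_segment a b).isPathConnected ⟨a, left_mem_segment ℝ a b⟩
    |>.joinedIn a (left_mem_segment ℝ a b) b (right_mem_segment ℝ a b)) h

def segs (s : Set (E3 × E3)) : Set E3 := ⋃ e ∈ s, segment ℝ e.1 e.2

theorem seg_sub_segs {s : Set (E3 × E3)} {a b : E3} (h : (a, b) ∈ s) : segment ℝ a b ⊆ segs s :=
  fun _ hx => Set.mem_biUnion h hx

theorem noK33 {X : Set E3} (h : X ≃ₜ S2) (p q : Fin 3 → E3) (s : Fin 3 → Fin 3 → Set (E3 × E3))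
    (hf : ∀ i j, (s i j).Finite) (hX : ∀ i j, ∀ e ∈ s i j, segment ℝ e.1 e.2 ⊆ X)
    (hj : ∀ i j, JoinedIn (segs (s i j)) (p i) (q j))
    (hd : ∀ i i' j j', i < i' → j ≠ j' → ∀ e ∈ s i j, ∀ e' ∈ s i' j',
      Disjoint (segment ℝ e.1 e.2) (segment ℝ e'.1 e'.2)) : False := by
  obtain ⟨x, hx, hxs⟩ := exists_missing h (⋃ i, ⋃ j, s i j)
    (Set.finite_iUnion fun i => Set.finite_iUnion fun j => hf i j)
    (by
      intro e he
      simp only [Set.mem_iUnion] at he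
      obtain ⟨i, j, he⟩ := he
      exact hX i j e he)
  have hd' : ∀ i i' j j', i < i' → j ≠ j' → Disjoint (segs (s i j)) (segs (s i' j')) := by
    intro i i' j j' hi hj
    rw [Set.disjoint_left]
    intro y hy hy'
    simp only [segs, Set.mem_iUnion] at hy hy'
    obtain ⟨e, he, hy⟩ := hy
    obtain ⟨e', he', hy'⟩ := hy'
    exact Set.disjoint_left.1 (hd i i' j j' hi hj e he e' he') hy hy'
  refine sphere_no_K33 h p q (fun i j => segs (s i j)) ?_ hj ?_ x hx ?_
  · intro i j
    exact Set.iUnion₂_subset (hX i j)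
  · intro i i' j j' hi hj
    rcases lt_or_gt_of_ne hi with h | h
    · exact hd' i i' j j' h hj
    · exact (hd' i' i j' j h hj.symm).symm
  · intro i j hx'
    simp only [segs, Set.mem_iUnion] at hx'
    obtain ⟨e, he, hx'⟩ := hx'
    refine hxs e ?_ hx'
    simp only [Set.mem_iUnion]
    exact ⟨i, j, he⟩

variable {L : SimplicialComplex ℝ E3} {m : E3 → E3 → ℕ}

theorem vertex_ext {F : Finset E3} (hF : F ∈ L.faces) {v p q : E3} (hv : v ∈ F)
    (hp : p ∈ convexHull ℝ (F : Set E3)) (hq : q ∈ convexHull ℝ (F : Set E3))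
    (h : v ∈ segment ℝ p q) : v = p ∨ v = q := by
  by_cases hG : (F.erase v).Nonempty
  swap
  · rw [Finset.not_nonempty_iff_eq_empty, Finset.erase_eq_empty_iff] at hG
    rcases hG with rfl | rfl
    · simp at hv
    · simp at hp; exact Or.inl hp.symm
  have hGf : F.erase v ∈ L.faces := L.down_closed hF (Finset.erase_subset _ _) hG
  have hvf : v ∈ L.vertices := L.down_closed hF (by simpa using hv) (by simp)
  have hnot : v ∉ convexHull ℝ ((F.erase v : Finset E3) : Set E3) := by
    rw [L.vertex_mem_convexHull_iff hvf hGf]; simp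
  have hins : (F : Set E3) = insert v ((F.erase v : Finset E3) : Set E3) := by
    rw [← Finset.coe_insert, Finset.insert_erase hv]
  rw [hins, convexHull_insert (by exact_mod_cast hG), mem_convexJoin] at hp hq
  obtain ⟨v1, hv1, g, hg, a, b, ha, hb, hab, rfl⟩ := hp
  obtain ⟨v2, hv2, k, hk, a', b', ha', hb', hab', rfl⟩ := hq
  rw [Set.mem_singleton_iff] at hv1 hv2
  rw [hv1, hv2] at h ⊢
  clear hv1 hv2
  obtain ⟨s, t, hs, ht, hst, hv'⟩ := h
  have key : (s * b + t * b') • v = (s * b) • g + (t * b') • k := by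
    have e1 : a = 1 - b := by linarith
    have e2 : a' = 1 - b' := by linarith
    have e3 : s = 1 - t := by linarith
    subst e1 e2 e3
    linear_combination (norm := module) (-1 : ℝ) • hv'
  by_cases hpos : 0 < s * b + t * b'
  · exfalso
    apply hnot
    have : v = ((s * b) / (s * b + t * b')) • g + ((t * b') / (s * b + t * b')) • k := by
      rw [div_eq_inv_mul, div_eq_inv_mul, mul_smul _ (s * b), mul_smul _ (t * b'), ← smul_add, ← key, smul_smul,
        inv_mul_cancel₀ hpos.ne', one_smul]
    have hsum : (s * b) / (s * b + t * b') + (t * b') / (s * b + t * b') = 1 := by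
      rw [← add_div, div_self hpos.ne']
    have hmem := convex_convexHull ℝ _ hg hk
      (show 0 ≤ (s * b) / (s * b + t * b') by positivity)
      (show 0 ≤ (t * b') / (s * b + t * b') by positivity) hsum
    rwa [← this] at hmem
  · have h1 : s * b = 0 := by nlinarith [mul_nonneg hs hb, mul_nonneg ht hb']
    have h2 : t * b' = 0 := by nlinarith [mul_nonneg hs hb, mul_nonneg ht hb']
    rcases mul_eq_zero.1 h1 with h0 | h0
    · have : b' = 0 := by
        have : t = 1 := by linarith
        simpa [this] using h2
      right
      rw [this, show a' = 1 by linarith]; simp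
    · left
      rw [h0, show a = 1 by linarith]; simp

theorem seg_disj {F G : Finset E3} (hF : F ∈ L.faces) (hG : G ∈ L.faces) {p q r s : E3}
    (hp : p ∈ convexHull ℝ (F : Set E3)) (hq : q ∈ convexHull ℝ (F : Set E3))
    (hr : r ∈ convexHull ℝ (G : Set E3)) (hs : s ∈ convexHull ℝ (G : Set E3))
    (h : (∃ c, c ≠ p ∧ c ≠ q ∧ F ∩ G ⊆ {c}) ∨ (∃ c, c ≠ r ∧ c ≠ s ∧ F ∩ G ⊆ {c})) :
    Disjoint (segment ℝ p q) (segment ℝ r s) := by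
  rw [Set.disjoint_left]
  intro x hx hx'
  have h1 : x ∈ convexHull ℝ (F : Set E3) := (convex_convexHull ℝ _).segment_subset hp hq hx
  have h2 : x ∈ convexHull ℝ (G : Set E3) := (convex_convexHull ℝ _).segment_subset hr hs hx'
  have h3 := L.inter_subset_convexHull hF hG ⟨h1, h2⟩
  rw [← Finset.coe_inter] at h3
  have aux : ∀ c, F ∩ G ⊆ {c} → x = c ∧ x ∈ F ∧ x ∈ G := by
    intro c hc
    have hne : (F ∩ G).Nonempty := by
      rw [Finset.nonempty_iff_ne_empty]
      intro h0
      rw [h0] at h3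
      simp at h3
    obtain ⟨d, hd⟩ := hne
    have hdc : d = c := by simpa using hc hd
    have : F ∩ G = {d} := by
      subst hdc
      exact Finset.Subset.antisymm hc (by simpa using hd)
    rw [this] at h3
    simp at h3
    subst h3
    exact ⟨hdc, (Finset.mem_inter.1 hd).1, (Finset.mem_inter.1 hd).2⟩
  rcases h with ⟨c, hcp, hcq, hc⟩ | ⟨c, hcp, hcq, hc⟩
  · obtain ⟨rfl, hxF, hxG⟩ := aux c hc
    rcases vertex_ext hF hxF hp hq hx with h | h
    · exact hcp h
    · exact hcq h
  · obtain ⟨rfl, hxF, hxG⟩ := aux c hc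
    rcases vertex_ext hG hxG hr hs hx' with h | h
    · exact hcp h
    · exact hcq h

def Adj (L : SimplicialComplex ℝ E3) (u v : E3) : Prop := u ≠ v ∧ ({u, v} : Finset E3) ∈ L.faces

theorem Adj.symm {u v : E3} (h : Adj L u v) : Adj L v u := ⟨h.1.symm, by rw [Finset.pair_comm]; exact h.2⟩

theorem mem_hull {F : Finset E3} {a : E3} (h : a ∈ F) : a ∈ convexHull ℝ (F : Set E3) :=
  subset_convexHull ℝ _ (by exact_mod_cast h)

/-- disjoint edges -/
theorem edge_disj {a b c d : E3} (h : Adj L a b) (h' : Adj L c d) (h1 : a ≠ c) (h2 : a ≠ d)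
    (h3 : b ≠ c) (h4 : b ≠ d) : Disjoint (segment ℝ a b) (segment ℝ c d) := by
  have hi : ({a, b} : Finset E3) ∩ {c, d} = ∅ := by
    ext x; simp only [Finset.mem_inter, Finset.mem_insert, Finset.mem_singleton]
    constructor
    · rintro ⟨rfl | rfl, rfl | rfl⟩ <;> simp_all
    · simp
  refine seg_disj h.2 h'.2 (mem_hull (by simp)) (mem_hull (by simp)) (mem_hull (by simp))
    (mem_hull (by simp)) ?_
  obtain ⟨e, he⟩ := Infinite.exists_notMem_finset ({a, b} : Finset E3)
  simp at he
  left
  exact ⟨e, he.1, he.2, by simp [hi]⟩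

theorem seg_space {F : Finset E3} (hF : F ∈ L.faces) {p q : E3}
    (hp : p ∈ convexHull ℝ (F : Set E3)) (hq : q ∈ convexHull ℝ (F : Set E3)) :
    segment ℝ p q ⊆ L.space :=
  ((convex_convexHull ℝ _).segment_subset hp hq).trans (L.convexHull_subset_space hF)

theorem Adj.seg_space {a b : E3} (h : Adj L a b) : segment ℝ a b ⊆ L.space :=
  _root_.seg_space h.2 (mem_hull (by simp)) (mem_hull (by simp))

theorem singleton_disj_fin {a b c : E3} {F : Finset E3} (h : ∀ x, x = a ∨ x = b → x ∈ F → x = c) :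
    ({a, b} : Finset E3) ∩ F ⊆ {c} := by
  intro x hx
  simp only [Finset.mem_inter, Finset.mem_insert, Finset.mem_singleton] at hx ⊢
  exact h x hx.1 hx.2

theorem no_three_triangles (h : L.space ≃ₜ S2) {s t : E3} (hst : s ≠ t) (u : Fin 3 → E3)
    (hu : Function.Injective u) (hs : ∀ i, u i ≠ s) (ht : ∀ i, u i ≠ t)
    (hF : ∀ i, ({s, t, u i} : Finset E3) ∈ L.faces) : False := by
  have as : ∀ i, Adj L (u i) s := fun i => ⟨hs i, L.down_closed (hF i) (by
    intro x; simp; tauto) (by simp)⟩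
  have at' : ∀ i, Adj L (u i) t := fun i => ⟨ht i, L.down_closed (hF i) (by
    intro x; simp; tauto) (by simp)⟩
  have hms : s ≠ midpoint ℝ s t := fun h => hst ((midpoint_eq_left_iff ℝ).1 h.symm)
  have hmt : t ≠ midpoint ℝ s t := fun h => hst ((midpoint_eq_right_iff ℝ).1 h.symm)
  have hmid : ∀ i, midpoint ℝ s t ∈ convexHull ℝ (({s, t, u i} : Finset E3) : Set E3) := fun i =>
    (convex_convexHull ℝ _).segment_subset (mem_hull (F := {s, t, u i}) (by simp))
      (mem_hull (F := {s, t, u i}) (by simp)) (midpoint_mem_segment s t)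
  have key1 : ∀ i i', i ≠ i' →
      Disjoint (segment ℝ (u i) s) (segment ℝ (u i') (midpoint ℝ s t)) := by
    intro i i' hi
    refine seg_disj (as i).2 (hF i') (mem_hull (by simp)) (mem_hull (by simp)) (mem_hull (by simp))
      (hmid i') (Or.inr ⟨s, (hs i').symm, hms, singleton_disj_fin ?_⟩)
    rintro x (rfl | rfl) hx
    · have := hu.ne hi
      have := hs i
      have := ht i
      simp_all
    · rfl
  have key2 : ∀ i i', i ≠ i' →
      Disjoint (segment ℝ (u i) t) (segment ℝ (u i') (midpoint ℝ s t)) := by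
    intro i i' hi
    refine seg_disj (at' i).2 (hF i') (mem_hull (by simp)) (mem_hull (by simp)) (mem_hull (by simp))
      (hmid i') (Or.inr ⟨t, (ht i').symm, hmt, singleton_disj_fin ?_⟩)
    rintro x (rfl | rfl) hx
    · have := hu.ne hi
      have := hs i
      have := ht i
      simp_all
    · rfl
  have key3 : ∀ i i', i ≠ i' → Disjoint (segment ℝ (u i) s) (segment ℝ (u i') t) := by
    intro i i' hi
    exact edge_disj (as i) (at' i') (hu.ne hi) (ht i) (hs i').symm hst
  refine noK33 h u ![s, t, midpoint ℝ s t] (fun i j => {(u i, ![s, t, midpoint ℝ s t] j)})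
    (fun i j => Set.finite_singleton _) ?_ ?_ ?_
  · rintro i j e rfl
    fin_cases j
    · exact (as i).seg_space
    · exact (at' i).seg_space
    · exact seg_space (hF i) (mem_hull (by simp)) (hmid i)
  · intro i j
    exact joined_segment (seg_sub_segs rfl)
  · rintro i i' j j' hi hj e rfl e' rfl
    fin_cases j <;> fin_cases j' <;> first | exact absurd rfl hj | skip
    · exact key3 i i' hi.ne
    · exact key1 i i' hi.ne
    · exact (key3 i' i hi.ne').symm
    · exact key2 i i' hi.ne
    · exact (key1 i' i hi.ne').symm
    · exact (key2 i' i hi.ne').symm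

theorem verts_finite (hL : L.faces.Finite) : {v : E3 | ({v} : Finset E3) ∈ L.faces}.Finite :=
  hL.preimage (fun a _ b _ h => by simpa using h)

theorem Adj.vert {u v : E3} (h : Adj L u v) : ({u} : Finset E3) ∈ L.faces :=
  L.down_closed h.2 (by simp) (by simp)

/-- adjacency avoiding a set of vertices -/
def AdjOff (L : SimplicialComplex ℝ E3) (c : Set E3) (u v : E3) : Prop := Adj L u v ∧ u ∉ c ∧ v ∉ c

theorem joined_of_path {c : Set E3} {w w' : E3} (hww : w ≠ w')
    (hw : Relation.ReflTransGen (AdjOff L c) w w') :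
    JoinedIn (segs {e | AdjOff L c e.1 e.2}) w w' := by
  have : w = w' ∨ JoinedIn (segs {e | AdjOff L c e.1 e.2}) w w' := by
    clear hww
    induction hw with
    | refl => left; rfl
    | @tail b d _ hbd ih =>
      have h1 : JoinedIn (segs {e | AdjOff L c e.1 e.2}) b d :=
        joined_segment (seg_sub_segs (by exact hbd))
      rcases ih with rfl | h2
      · exact Or.inr h1
      · exact Or.inr (h2.trans h1)
  exact this.resolve_left hww

theorem no_P (hfin : L.faces.Finite) (h : L.space ≃ₜ S2) {t t' z z' w w' : E3}
    (tt : t ≠ t') (zz : z ≠ z')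
    (tz : Adj L t z) (tz' : Adj L t z') (tw : Adj L t w)
    (tz2 : Adj L t' z) (tz2' : Adj L t' z') (tw2 : Adj L t' w)
    (wz : Adj L w' z) (wz' : Adj L w' z') (hwz : w ≠ z) (hwz' : w ≠ z') (hwt : w' ≠ t) (hwt' : w' ≠ t')
    (hw : Relation.ReflTransGen (AdjOff L {t, t', z, z'}) w w')
    (hww : w ≠ w') : False := by
  set c : Set E3 := {t, t', z, z'} with hc
  set B : Set (E3 × E3) := {e | AdjOff L c e.1 e.2} with hB
  have hBf : B.Finite := by
    refine ((verts_finite hfin).prod (verts_finite hfin)).subset ?_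
    rintro ⟨a, b⟩ h
    exact ⟨h.1.vert, h.1.symm.vert⟩
  have hconn : JoinedIn (segs B) w' w := (joined_of_path hww hw).symm
  have hBd : ∀ a ∈ c, ∀ b ∈ c, Adj L a b → ∀ e ∈ B,
      Disjoint (segment ℝ a b) (segment ℝ e.1 e.2) := by
    rintro a ha b hb hab ⟨e, f⟩ ⟨hef, he, hf⟩
    refine edge_disj hab hef ?_ ?_ ?_ ?_ <;> rintro rfl
    · exact he ha
    · exact hf ha
    · exact he hb
    · exact hf hb
  have hct : t ∈ c := by simp [hc]
  have hct' : t' ∈ c := by simp [hc]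
  have hcz : z ∈ c := by simp [hc]
  have hcz' : z' ∈ c := by simp [hc]
  refine noK33 h ![t, t', w'] ![z, z', w] ![![{(t, z)}, {(t, z')}, {(t, w)}],
    ![{(t', z)}, {(t', z')}, {(t', w)}], ![{(w', z)}, {(w', z')}, B]] ?_ ?_ ?_ ?_
  · intro i j
    fin_cases i <;> fin_cases j <;> first | exact Set.finite_singleton _ | exact hBf
  · intro i j
    fin_cases i <;> fin_cases j
    · rintro e rfl; exact tz.seg_space
    · rintro e rfl; exact tz'.seg_space
    · rintro e rfl; exact tw.seg_space
    · rintro e rfl; exact tz2.seg_space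
    · rintro e rfl; exact tz2'.seg_space
    · rintro e rfl; exact tw2.seg_space
    · rintro e rfl; exact wz.seg_space
    · rintro e rfl; exact wz'.seg_space
    · intro e he; exact he.1.seg_space
  · intro i j
    fin_cases i <;> fin_cases j <;>
      first | exact joined_segment (seg_sub_segs rfl) | exact hconn
  · intro i i' j j' hi hj
    fin_cases i <;> fin_cases i' <;> first | exact absurd hi (by decide) | skip
    all_goals fin_cases j <;> fin_cases j' <;> first | exact absurd rfl hj | skip
    · rintro e rfl e' rfl; exact edge_disj tz tz2' tt tz'.1 tz2.1.symm zz
    · rintro e rfl e' rfl; exact edge_disj tz tw2 tt tw.1 tz2.1.symm hwz.symm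
    · rintro e rfl e' rfl; exact edge_disj tz' tz2 tt tz.1 tz2'.1.symm zz.symm
    · rintro e rfl e' rfl; exact edge_disj tz' tw2 tt tw.1 tz2'.1.symm hwz'.symm
    · rintro e rfl e' rfl; exact edge_disj tw tz2 tt tz.1 tw2.1.symm hwz
    · rintro e rfl e' rfl; exact edge_disj tw tz2' tt tz'.1 tw2.1.symm hwz'
    · rintro e rfl e' rfl; exact edge_disj tz wz' hwt.symm tz'.1 wz.1.symm zz
    · rintro e rfl e' he'; exact hBd _ hct _ hcz tz e' he'
    · rintro e rfl e' rfl; exact edge_disj tz' wz hwt.symm tz.1 wz'.1.symm zz.symm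
    · rintro e rfl e' he'; exact hBd _ hct _ hcz' tz' e' he'
    · rintro e rfl e' rfl; exact edge_disj tw wz hwt.symm tz.1 hww hwz
    · rintro e rfl e' rfl; exact edge_disj tw wz' hwt.symm tz'.1 hww hwz'
    · rintro e rfl e' rfl; exact edge_disj tz2 wz' hwt'.symm tz2'.1 wz.1.symm zz
    · rintro e rfl e' he'; exact hBd _ hct' _ hcz tz2 e' he'
    · rintro e rfl e' rfl; exact edge_disj tz2' wz hwt'.symm tz2.1 wz'.1.symm zz.symm
    · rintro e rfl e' he'; exact hBd _ hct' _ hcz' tz2' e' he'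
    · rintro e rfl e' rfl; exact edge_disj tw2 wz hwt'.symm tz2.1 hww hwz
    · rintro e rfl e' rfl; exact edge_disj tw2 wz' hwt'.symm tz2'.1 hww hwz'

theorem fan_exists {t z y : E3} (h1 : t ≠ z) (h2 : t ≠ y) (h3 : z ≠ y)
    (hF : ({t, z, y} : Finset E3) ∈ L.faces) :
    ∃ y1, y1 ∈ convexHull ℝ (({t, z, y} : Finset E3) : Set E3) ∧
      ∀ a b c d, a ∈ ({t, z, y} : Finset E3) → Adj L c d → c ∉ ({t, z, y} : Finset E3) → d ≠ a →
      b = y1 → Disjoint (segment ℝ b a) (segment ℝ c d) := by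
  set F : Finset E3 := {t, z, y} with hFd
  have ht : t ∈ F := by simp [hFd]
  have hz : z ∈ F := by simp [hFd]
  have hy : y ∈ F := by simp [hFd]
  have hmid : midpoint ℝ t z ∈ convexHull ℝ (F : Set E3) :=
    (convex_convexHull ℝ _).segment_subset (mem_hull ht) (mem_hull hz) (midpoint_mem_segment t z)
  have hmt : t ≠ midpoint ℝ t z := fun h => h1 ((midpoint_eq_left_iff ℝ).1 h.symm)
  have hmz : z ≠ midpoint ℝ t z := fun h => h1 ((midpoint_eq_right_iff ℝ).1 h.symm)
  have hmy : y ≠ midpoint ℝ t z := by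
    intro h
    rcases vertex_ext hF hy (mem_hull ht) (mem_hull hz) (h ▸ midpoint_mem_segment t z) with h | h
    · exact h2 h.symm
    · exact h3 h.symm
  set y1 := midpoint ℝ y (midpoint ℝ t z) with hy1
  have hy1F : y1 ∈ convexHull ℝ (F : Set E3) :=
    (convex_convexHull ℝ _).segment_subset (mem_hull hy) hmid (midpoint_mem_segment _ _)
  have hy1m : y1 ∈ segment ℝ y (midpoint ℝ t z) := midpoint_mem_segment _ _
  have hne : ∀ d ∈ F, d ≠ y1 := by
    intro d hd he
    subst he
    have := vertex_ext hF hd (mem_hull hy) hmid hy1m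
    simp only [hFd, Finset.mem_insert, Finset.mem_singleton] at hd
    rcases hd with hd | hd | hd
    · rw [hd] at this; rcases this with h | h
      · exact h2 h
      · exact hmt h
    · rw [hd] at this; rcases this with h | h
      · exact h3 h
      · exact hmz h
    · exact hmy ((midpoint_eq_left_iff ℝ).1 hd)
  refine ⟨y1, hy1F, ?_⟩
  rintro a b c d ha hcd hc hda rfl
  refine seg_disj hF hcd.2 hy1F (mem_hull ha) (mem_hull (by simp)) (mem_hull (by simp))
    (Or.inl ⟨d, ?_, hda, ?_⟩)
  · by_cases hd : d ∈ F
    · exact hne d hd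
    · rintro rfl
      exact hd ((L.vertex_mem_convexHull_iff hcd.symm.vert hF).1 hy1F)
  · intro x hx
    simp only [Finset.mem_inter, Finset.mem_insert, Finset.mem_singleton] at hx
    obtain ⟨hxF, rfl | rfl⟩ := hx
    · exact absurd hxF hc
    · simp

theorem no_Q (h : L.space ≃ₜ S2) {t t' z z' y u x : E3}
    (hnd : [t, t', z, z', y, u, x].Nodup)
    (yt : Adj L t' y) (yz : Adj L z' y)
    (tz' : Adj L z' t) (tz2 : Adj L t' z)
    (hF : ({t, z, y} : Finset E3) ∈ L.faces)
    (ut : Adj L u t) (ut' : Adj L t' u) (xz : Adj L x z) (xz' : Adj L z' x) : False := by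
  simp only [List.nodup_cons, List.mem_cons, List.not_mem_nil, not_or, List.nodup_nil, or_false,
    not_false_iff, and_true] at hnd
  obtain ⟨⟨n1, n2, n3, n4, n5, n6⟩, ⟨n7, n8, n9, n10, n11⟩, ⟨n12, n13, n14, n15⟩,
    ⟨n16, n17, n18⟩, ⟨n19, n20⟩, n21⟩ := hnd
  rw [← ne_eq] at *
  obtain ⟨y1, hy1, hfan⟩ := fan_exists n2 n4 n13 hF
  have ht : t ∈ ({t, z, y} : Finset E3) := by simp
  have hz : z ∈ ({t, z, y} : Finset E3) := by simp
  have hy : y ∈ ({t, z, y} : Finset E3) := by simp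
  have ht' : t' ∉ ({t, z, y} : Finset E3) := by simp; grind
  have hz' : z' ∉ ({t, z, y} : Finset E3) := by simp; grind
  have hu : u ∉ ({t, z, y} : Finset E3) := by simp; grind
  have hx : x ∉ ({t, z, y} : Finset E3) := by simp; grind
  refine noK33 h ![y1, t', z'] ![y, t, z] ![![{(y1, y)}, {(y1, t)}, {(y1, z)}],
    ![{(t', y)}, {(t', u), (u, t)}, {(t', z)}], ![{(z', y)}, {(z', t)}, {(z', x), (x, z)}]]
    ?_ ?_ ?_ ?_
  · intro i j
    fin_cases i <;> fin_cases j <;> first | exact Set.finite_singleton _ | exact (Set.finite_singleton _).insert _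
  · intro i j
    fin_cases i <;> fin_cases j
    · rintro e rfl; exact seg_space hF hy1 (mem_hull hy)
    · rintro e rfl; exact seg_space hF hy1 (mem_hull ht)
    · rintro e rfl; exact seg_space hF hy1 (mem_hull hz)
    · rintro e rfl; exact yt.seg_space
    · rintro e (rfl | rfl)
      · exact ut'.seg_space
      · exact ut.seg_space
    · rintro e rfl; exact tz2.seg_space
    · rintro e rfl; exact yz.seg_space
    · rintro e rfl; exact tz'.seg_space
    · rintro e (rfl | rfl)
      · exact xz'.seg_space
      · exact xz.seg_space
  · intro i j
    fin_cases i <;> fin_cases j <;>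
      first
      | exact joined_segment (seg_sub_segs rfl)
      | exact (joined_segment (seg_sub_segs (Or.inl rfl))).trans (joined_segment (seg_sub_segs (Or.inr rfl)))
  · intro i i' j j' hi hj
    fin_cases i <;> fin_cases i' <;> first | exact absurd hi (by decide) | skip
    all_goals fin_cases j <;> fin_cases j' <;> first | exact absurd rfl hj | skip
    · rintro e rfl e' (rfl | rfl)
      · exact hfan _ _ _ _ hy ut' ht' n19.symm rfl
      · exact hfan _ _ _ _ hy ut hu n4 rfl
    · rintro e rfl e' rfl; exact hfan _ _ _ _ hy tz2 ht' n13 rfl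
    · rintro e rfl e' rfl; exact hfan _ _ _ _ ht yt ht' n4.symm rfl
    · rintro e rfl e' rfl; exact hfan _ _ _ _ ht tz2 ht' n2.symm rfl
    · rintro e rfl e' rfl; exact hfan _ _ _ _ hz yt ht' n13.symm rfl
    · rintro e rfl e' (rfl | rfl)
      · exact hfan _ _ _ _ hz ut' ht' n14.symm rfl
      · exact hfan _ _ _ _ hz ut hu n2 rfl
    · rintro e rfl e' rfl; exact hfan _ _ _ _ hy tz' hz' n4 rfl
    · rintro e rfl e' (rfl | rfl)
      · exact hfan _ _ _ _ hy xz' hz' n20.symm rfl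
      · exact hfan _ _ _ _ hy xz hx n13 rfl
    · rintro e rfl e' rfl; exact hfan _ _ _ _ ht yz hz' n4.symm rfl
    · rintro e rfl e' (rfl | rfl)
      · exact hfan _ _ _ _ ht xz' hz' n6.symm rfl
      · exact hfan _ _ _ _ ht xz hx n2.symm rfl
    · rintro e rfl e' rfl; exact hfan _ _ _ _ hz yz hz' n13.symm rfl
    · rintro e rfl e' rfl; exact hfan _ _ _ _ hz tz' hz' n2 rfl
    · rintro e rfl e' rfl; apply edge_disj yt tz' <;> grind
    · rintro e rfl e' (rfl | rfl)
      · apply edge_disj yt xz' <;> grind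
      · apply edge_disj yt xz <;> grind
    · rintro e (rfl | rfl) e' rfl
      · apply edge_disj ut' yz <;> grind
      · apply edge_disj ut yz <;> grind
    · rintro e (rfl | rfl) e' (rfl | rfl)
      · apply edge_disj ut' xz' <;> grind
      · apply edge_disj ut' xz <;> grind
      · apply edge_disj ut xz' <;> grind
      · apply edge_disj ut xz <;> grind
    · rintro e rfl e' rfl; apply edge_disj tz2 yz <;> grind
    · rintro e rfl e' rfl; apply edge_disj tz2 tz' <;> grind

def Adj2 (L : SimplicialComplex ℝ E3) (m : E3 → E3 → ℕ) (u v : E3) : Prop := Adj L u v ∧ m u v = 2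

theorem Adj2.symm (hL : IsLabeledS2 L m) {u v : E3} (h : Adj2 L m u v) : Adj2 L m v u :=
  ⟨h.1.symm, by rw [hL.symm]; exact h.2⟩

theorem Adj2.ne {u v : E3} (h : Adj2 L m u v) : u ≠ v := h.1.1

def NN (L : SimplicialComplex ℝ E3) (m : E3 → E3 → ℕ) (t t' : E3) : Set E3 :=
  {v | Adj2 L m t v ∧ Adj2 L m t' v}

def VS (L : SimplicialComplex ℝ E3) (m : E3 → E3 → ℕ) (t t' : E3) : Set E3 :=
  {v | v = t ∨ v = t' ∨ v ∈ NN L m t t'}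

theorem VS_comm (t t' : E3) : VS L m t t' = VS L m t' t := by
  ext v; simp only [VS, NN, Set.mem_ofPred_eq]; tauto

theorem NN_comm (t t' : E3) : NN L m t t' = NN L m t' t := by
  ext v; simp only [NN, Set.mem_ofPred_eq]; tauto

def InfN (L : SimplicialComplex ℝ E3) (X : Set E3) : Prop :=
  (∃ a ∈ X, ∃ b ∈ X, a ≠ b ∧ ¬ Adj L a b) ∨
  (∃ a ∈ X, ∃ b ∈ X, ∃ c ∈ X, a ≠ b ∧ a ≠ c ∧ b ≠ c)

def IsS (L : SimplicialComplex ℝ E3) (m : E3 → E3 → ℕ) (W : Set E3) : Prop :=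
  ∃ t t', t ≠ t' ∧ ¬ Adj L t t' ∧ W = VS L m t t' ∧ InfN L (NN L m t t')

structure Circ (L : SimplicialComplex ℝ E3) (m : E3 → E3 → ℕ) (a b c d : E3) : Prop where
  ac : a ≠ c
  bd : b ≠ d
  nac : ¬ Adj L a c
  nbd : ¬ Adj L b d
  ab : Adj2 L m a b
  bc : Adj2 L m b c
  cd : Adj2 L m c d
  da : Adj2 L m d a

theorem Circ.rot {a b c d : E3} (h : Circ L m a b c d) : Circ L m b c d a :=
  ⟨h.bd, h.ac.symm, h.nbd, fun k => h.nac k.symm, h.bc, h.cd, h.da, h.ab⟩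

def RelW (L : SimplicialComplex ℝ E3) (m : E3 → E3 → ℕ) (W W' : Set E3) : Prop :=
  ∃ a b c d, Circ L m a b c d ∧ W ∩ W' = {a, b, c, d}

theorem mem_VS_not {t t' v : E3} (h : v ∈ VS L m t t') (h1 : v ≠ t) (h2 : v ≠ t') :
    v ∈ NN L m t t' := by
  rcases h with h | h | h
  · exact absurd h h1
  · exact absurd h h2
  · exact h

theorem circ_pos1 {t t' a b c d : E3} (hC : Circ L m a b c d)
    (hc : c ∈ VS L m t t') (hat : a = t) : c = t' := by
  subst hat
  rcases hc with h | h | h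
  · exact absurd h.symm hC.ac
  · exact h
  · exact absurd h.1.1 hC.nac

theorem circ_pos {t t' a b c d : E3} (hC : Circ L m a b c d)
    (ha : a ∈ VS L m t t') (hb : b ∈ VS L m t t') (hc : c ∈ VS L m t t') (hd : d ∈ VS L m t t') :
    (a = t ∧ c = t') ∨ (a = t' ∧ c = t) ∨ (b = t ∧ d = t') ∨ (b = t' ∧ d = t) ∨
    (a ∈ NN L m t t' ∧ b ∈ NN L m t t' ∧ c ∈ NN L m t t' ∧ d ∈ NN L m t t') := by
  have ha' := ha; have hb' := hb; have hc' := hc; have hd' := hd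
  rw [VS_comm] at ha' hb' hc' hd'
  have h1 := circ_pos1 hC hc
  have h2 := circ_pos1 hC hc'
  have h3 := circ_pos1 hC.rot hd
  have h4 := circ_pos1 hC.rot hd'
  have h5 := circ_pos1 hC.rot.rot ha
  have h6 := circ_pos1 hC.rot.rot ha'
  have h7 := circ_pos1 hC.rot.rot.rot hb
  have h8 := circ_pos1 hC.rot.rot.rot hb'
  by_cases e1 : a = t
  · exact Or.inl ⟨e1, h1 e1⟩
  by_cases e2 : a = t'
  · exact Or.inr (Or.inl ⟨e2, h2 e2⟩)
  by_cases e3 : b = t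
  · exact Or.inr (Or.inr (Or.inl ⟨e3, h3 e3⟩))
  by_cases e4 : b = t'
  · exact Or.inr (Or.inr (Or.inr (Or.inl ⟨e4, h4 e4⟩)))
  refine Or.inr (Or.inr (Or.inr (Or.inr ⟨mem_VS_not ha e1 e2, mem_VS_not hb e3 e4,
    mem_VS_not hc ?_ ?_, mem_VS_not hd ?_ ?_⟩)))
  · exact fun h => e2 (h5 h)
  · exact fun h => e1 (h6 h)
  · exact fun h => e4 (h7 h)
  · exact fun h => e3 (h8 h)

def GlueS (L : SimplicialComplex ℝ E3) (m : E3 → E3 → ℕ) (S S1 : Set E3) : Prop :=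
  S ≠ S1 ∧ ∃ t t' z z', S = VS L m t t' ∧ S1 = VS L m z z' ∧ Circ L m t z t' z' ∧
    S ∩ S1 = {t, t', z, z'}

theorem GlueS.symm {S S1 : Set E3} (h : GlueS L m S S1) : GlueS L m S1 S := by
  obtain ⟨h0, t, t', z, z', h1, h2, h3, h4⟩ := h
  refine ⟨h0.symm, z, z', t', t, h2, by rw [VS_comm, h1], h3.rot, ?_⟩
  rw [Set.inter_comm, h4]
  ext v; simp; tauto

theorem NN_swap (hL : IsLabeledS2 L m) {t t' a b : E3} (ha : a ∈ NN L m t t') (hb : b ∈ NN L m t t') :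
    t ∈ NN L m a b ∧ t' ∈ NN L m a b :=
  ⟨⟨ha.1.symm hL, hb.1.symm hL⟩, ⟨ha.2.symm hL, hb.2.symm hL⟩⟩

theorem NN_not_left {t t' : E3} : t ∉ NN L m t t' := fun h => h.1.ne rfl
theorem NN_not_right {t t' : E3} : t' ∉ NN L m t t' := fun h => h.2.ne rfl
theorem NN_VS {t t' v : E3} (h : v ∈ NN L m t t') : v ∈ VS L m t t' := Or.inr (Or.inr h)
theorem left_VS {t t' : E3} : t ∈ VS L m t t' := Or.inl rfl
theorem right_VS {t t' : E3} : t' ∈ VS L m t t' := Or.inr (Or.inl rfl)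

theorem glue_opp (hL : IsLabeledS2 L m) {t t' z z' a b c d : E3}
    (hC : Circ L m a b c d) (hI : VS L m t t' ∩ VS L m z z' = {a, b, c, d})
    (h1 : (a = t ∧ c = t') ∨ (a = t' ∧ c = t))
    (h2 : (a ∈ NN L m z z' ∧ b ∈ NN L m z z' ∧ c ∈ NN L m z z' ∧ d ∈ NN L m z z')) : False := by
  have hz : z ∈ NN L m t t' := by
    rcases h1 with ⟨rfl, rfl⟩ | ⟨rfl, rfl⟩
    · exact (NN_swap hL h2.1 h2.2.2.1).1
    · exact (NN_swap hL h2.2.2.1 h2.1).1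
  have : z ∈ VS L m t t' ∩ VS L m z z' := ⟨NN_VS hz, left_VS⟩
  rw [hI] at this
  obtain ⟨ha, hb, hc, hd⟩ := h2
  rcases this with rfl | rfl | rfl | rfl <;> exact NN_not_left (by assumption)

theorem glue_of_rel (hL : IsLabeledS2 L m) {S S1 : Set E3} (hS : IsS L m S) (hS1 : IsS L m S1)
    (hne : S ≠ S1) (h : RelW L m S S1) : GlueS L m S S1 := by
  obtain ⟨t, t', htt, hntt, rfl, -⟩ := hS
  obtain ⟨z, z', hzz, hnzz, rfl, -⟩ := hS1
  obtain ⟨a, b, c, d, hC, hI⟩ := h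
  have hmem : ∀ x ∈ ({a, b, c, d} : Set E3), x ∈ VS L m t t' ∧ x ∈ VS L m z z' := by
    intro x hx; rw [← hI] at hx; exact hx
  have ha := hmem a (by simp)
  have hb := hmem b (by simp)
  have hc := hmem c (by simp)
  have hd := hmem d (by simp)
  have hI1 : VS L m t t' ∩ VS L m z z' = {a, c, b, d} := by rw [hI]; ext; simp; tauto
  have hI1' : VS L m t t' ∩ VS L m z z' = {b, c, d, a} := by rw [hI]; ext; simp; tauto
  have hI2 : VS L m t t' ∩ VS L m z z' = {b, d, c, a} := by rw [hI]; ext; simp; tauto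
  have hI3 : VS L m z z' ∩ VS L m t t' = {a, b, c, d} := by rw [Set.inter_comm, hI]
  have hI3' : VS L m z z' ∩ VS L m t t' = {b, c, d, a} := by rw [Set.inter_comm, hI1']
  have p1 := circ_pos hC ha.1 hb.1 hc.1 hd.1
  have p2 := circ_pos hC ha.2 hb.2 hc.2 hd.2
  have q1 : VS L m t t' = VS L m a c ∨ VS L m t t' = VS L m b d ∨
    (a ∈ NN L m t t' ∧ b ∈ NN L m t t' ∧ c ∈ NN L m t t' ∧ d ∈ NN L m t t') := by
    rcases p1 with ⟨rfl, rfl⟩ | ⟨rfl, rfl⟩ | ⟨rfl, rfl⟩ | ⟨rfl, rfl⟩ | h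
    · exact Or.inl rfl
    · exact Or.inl (VS_comm _ _)
    · exact Or.inr (Or.inl rfl)
    · exact Or.inr (Or.inl (VS_comm _ _))
    · exact Or.inr (Or.inr h)
  have q2 : VS L m z z' = VS L m a c ∨ VS L m z z' = VS L m b d ∨
    (a ∈ NN L m z z' ∧ b ∈ NN L m z z' ∧ c ∈ NN L m z z' ∧ d ∈ NN L m z z') := by
    rcases p2 with ⟨rfl, rfl⟩ | ⟨rfl, rfl⟩ | ⟨rfl, rfl⟩ | ⟨rfl, rfl⟩ | h
    · exact Or.inl rfl
    · exact Or.inl (VS_comm _ _)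
    · exact Or.inr (Or.inl rfl)
    · exact Or.inr (Or.inl (VS_comm _ _))
    · exact Or.inr (Or.inr h)
  rcases q1 with q1 | q1 | q1
  · rcases q2 with q2 | q2 | q2
    · exact absurd (q1.trans q2.symm) hne
    · exact ⟨hne, a, c, b, d, q1, q2, hC, hI1⟩
    · exfalso
      rw [q1] at hI
      exact glue_opp hL hC hI (Or.inl ⟨rfl, rfl⟩) q2
  · rcases q2 with q2 | q2 | q2
    · refine ⟨hne, b, d, c, a, q1, by rw [q2, VS_comm], hC.rot, hI2⟩
    · exact absurd (q1.trans q2.symm) hne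
    · exfalso
      rw [q1] at hI1'
      exact glue_opp hL hC.rot hI1' (Or.inl ⟨rfl, rfl⟩) ⟨q2.2.1, q2.2.2.1, q2.2.2.2, q2.1⟩
  · exfalso
    rcases q2 with q2 | q2 | q2
    · rw [q2] at hI3
      exact glue_opp hL hC hI3 (Or.inl ⟨rfl, rfl⟩) q1
    · rw [q2] at hI3'
      exact glue_opp hL hC.rot hI3' (Or.inl ⟨rfl, rfl⟩) ⟨q1.2.1, q1.2.2.1, q1.2.2.2, q1.1⟩
    · obtain ⟨a1, b1, c1, d1⟩ := q1
      obtain ⟨a2, b2, c2, d2⟩ := q2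
      have hzin : z ∉ VS L m t t' := by
        intro hz
        have : z ∈ VS L m t t' ∩ VS L m z z' := ⟨hz, left_VS⟩
        rw [hI] at this
        rcases this with rfl | rfl | rfl | rfl <;> exact NN_not_left (by assumption)
      have zt : z ≠ t := by rintro rfl; exact hzin left_VS
      have zt' : z ≠ t' := by rintro rfl; exact hzin right_VS
      obtain ⟨e⟩ := hL.sphere
      refine no_P hL.finite e htt hC.ac a1.1.1 c1.1.1 b1.1.1 a1.2.1 c1.2.1 b1.2.1
        a2.1.1 c2.1.1 hC.ab.ne.symm hC.bc.ne zt zt' ?_ b2.1.ne.symm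
      refine Relation.ReflTransGen.single ⟨b2.1.1.symm, ?_, ?_⟩
      · simp only [Set.mem_insert_iff, Set.mem_singleton_iff, not_or]
        exact ⟨b1.1.ne.symm, b1.2.ne.symm, hC.ab.ne.symm, hC.bc.ne⟩
      · simp only [Set.mem_insert_iff, Set.mem_singleton_iff, not_or]
        exact ⟨zt, zt', a2.1.ne, c2.1.ne⟩

/-- the side of `S ∩ S1` containing `S` -/
def Side (L : SimplicialComplex ℝ E3) (S S1 : Set E3) : Set E3 :=
  {v | v ∉ S ∩ S1 ∧ ∃ w ∈ S, w ∉ S1 ∧ Relation.ReflTransGen (AdjOff L (S ∩ S1)) w v}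

theorem side1 {S S1 : Set E3} {v : E3} (h : v ∈ S) (h1 : v ∉ S1) : v ∈ Side L S S1 :=
  ⟨fun k => h1 k.2, v, h, h1, Relation.ReflTransGen.refl⟩

theorem side1' {S S1 : Set E3} : S ⊆ Side L S S1 ∪ (S ∩ S1) := by
  intro v hv
  by_cases h : v ∈ S1
  · exact Or.inr ⟨hv, h⟩
  · exact Or.inl (side1 hv h)

theorem side3 {S S1 : Set E3} {u v : E3} (h : u ∈ Side L S S1) (ha : Adj L u v) (hv : v ∉ S ∩ S1) :
    v ∈ Side L S S1 := by
  obtain ⟨h1, w, hw, hw1, hp⟩ := h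
  exact ⟨hv, w, hw, hw1, hp.tail ⟨ha, h1, hv⟩⟩

theorem side2 (hL : IsLabeledS2 L m) {S S1 : Set E3} (hG : GlueS L m S S1) {v : E3}
    (h1 : v ∈ S1) (h : v ∈ Side L S S1) : False := by
  obtain ⟨hne, t, t', z, z', rfl, rfl, hC, hI⟩ := hG
  obtain ⟨hv, w, hw, hw1, hp⟩ := h
  obtain ⟨e⟩ := hL.sphere
  have hw2 : w ∉ VS L m t t' ∩ VS L m z z' := fun k => hw1 k.2
  have hwv : w ≠ v := by rintro rfl; exact hw1 h1
  rw [hI] at hp hw2 hv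
  simp only [Set.mem_insert_iff, Set.mem_singleton_iff, not_or] at hv hw2
  have hwN := mem_VS_not hw hw2.1 hw2.2.1
  have hvN := mem_VS_not h1 hv.2.2.1 hv.2.2.2
  exact no_P hL.finite e hC.ac hC.bd hC.ab.1 hC.da.1.symm hwN.1.1 hC.bc.1.symm hC.cd.1 hwN.2.1
    hvN.1.1.symm hvN.2.1.symm hw2.2.2.1 hw2.2.2.2 hv.1 hv.2.1 hp hwv

theorem AdjOff.symm {c : Set E3} {u v : E3} (h : AdjOff L c u v) : AdjOff L c v u :=
  ⟨h.1.symm, h.2.2, h.2.1⟩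

theorem path_symm {c : Set E3} {u v : E3} (h : Relation.ReflTransGen (AdjOff L c) u v) :
    Relation.ReflTransGen (AdjOff L c) v u := by
  induction h with
  | refl => exact .refl
  | tail _ h ih => exact .head h.symm ih

theorem side2' (hL : IsLabeledS2 L m) {S S1 : Set E3} (hG : GlueS L m S S1) {v : E3}
    (h1 : v ∈ Side L S1 S) (h : v ∈ Side L S S1) : False := by
  obtain ⟨hv, w, hw, hw1, hp⟩ := h
  obtain ⟨hv', w', hw', hw1', hp'⟩ := h1
  rw [Set.inter_comm] at hp'
  exact side2 hL hG hw' ⟨fun k => hw1' k.1, w, hw, hw1, hp.trans (path_symm hp')⟩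

theorem opp_of_sub {t t' z z' : E3} (hC : Circ L m t z t' z') {X : Set E3}
    (hX : InfN L X) (h : X ⊆ {t, t', z, z'}) : (t ∈ X ∧ t' ∈ X) ∨ (z ∈ X ∧ z' ∈ X) := by
  have h1 := hC.ab.1
  have h2 := hC.bc.1
  have h3 := hC.cd.1
  have h4 := hC.da.1
  have h1' := hC.ab.1.symm
  have h2' := hC.bc.1.symm
  have h3' := hC.cd.1.symm
  have h4' := hC.da.1.symm
  rcases hX with ⟨a, ha, b, hb, hab, hn⟩ | ⟨a, ha, b, hb, c, hc, hab, hac, hbc⟩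
  · rcases h ha with rfl | rfl | rfl | rfl <;> rcases h hb with rfl | rfl | rfl | rfl <;> 
      first | (exfalso; contradiction) | tauto
  · rcases h ha with rfl | rfl | rfl | rfl <;> rcases h hb with rfl | rfl | rfl | rfl <;> 
      rcases h hc with rfl | rfl | rfl | rfl <;> 
      first | (exfalso; contradiction) | tauto

theorem pair_of_mem {t t' z z' p p' : E3} (hC : Circ L m t z t' z') (hp : p ≠ p') (hn : ¬ Adj L p p')
    (h : p ∈ ({t, t', z, z'} : Set E3)) (h' : p' ∈ ({t, t', z, z'} : Set E3)) :
    (p = t ∧ p' = t') ∨ (p = t' ∧ p' = t) ∨ (p = z ∧ p' = z') ∨ (p = z' ∧ p' = z) := by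
  have h1 := hC.ab.1
  have h2 := hC.bc.1
  have h3 := hC.cd.1
  have h4 := hC.da.1
  have h1' := hC.ab.1.symm
  have h2' := hC.bc.1.symm
  have h3' := hC.cd.1.symm
  have h4' := hC.da.1.symm
  rcases h with rfl | rfl | rfl | rfl <;> rcases h' with rfl | rfl | rfl | rfl <;> 
      first | (exfalso; contradiction) | tauto

theorem side4 (hL : IsLabeledS2 L m) {S S1 : Set E3} (hG : GlueS L m S S1) {p p' : E3}
    (hp : p ≠ p') (hn : ¬ Adj L p p') {X : Set E3} (hX : X ⊆ NN L m p p') (hI : InfN L X) :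
    ({p, p'} ∪ X ⊆ Side L S S1 ∪ (S ∩ S1)) ∨ (∀ v ∈ {p, p'} ∪ X, v ∉ Side L S S1) := by
  have hG' := hG
  obtain ⟨hne, t, t', z, z', hS, hS1, hC, hc⟩ := hG
  -- crossing case
  have cross : ∀ p p', X ⊆ NN L m p p' → p ∈ Side L S S1 → p' ∉ Side L S S1 → p' ∉ S ∩ S1 → False := by
    intro p p' hX h1 h2 h3
    have hsub : X ⊆ S ∩ S1 := by
      intro v hv
      by_contra hvc
      have : v ∈ Side L S S1 := side3 h1 (hX hv).1.1 hvc
      exact h2 (side3 this (hX hv).2.1.symm h3)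
    rw [hc] at hsub
    rcases opp_of_sub hC hI hsub with ⟨ha, hb⟩ | ⟨ha, hb⟩
    · have := NN_swap hL (hX ha) (hX hb)
      have h4 : p' ∈ S := by rw [hS]; exact NN_VS this.2
      rcases side1' h4 with h | h
      · exact h2 h
      · exact h3 h
    · have := NN_swap hL (hX ha) (hX hb)
      have h4 : p ∈ S1 := by rw [hS1]; exact NN_VS this.1
      exact side2 hL hG' h4 h1
  have hadj : ∀ p p', X ⊆ NN L m p p' → p ∈ Side L S S1 → p' ∈ Side L S S1 ∪ (S ∩ S1) →
      ({p, p'} ∪ X ⊆ Side L S S1 ∪ (S ∩ S1)) := by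
    rintro p p' hX h1 h2 v ((rfl | rfl) | hv)
    · exact Or.inl h1
    · exact h2
    · by_cases hvc : v ∈ S ∩ S1
      · exact Or.inr hvc
      · exact Or.inl (side3 h1 (hX hv).1.1 hvc)
  have hX' := hX
  rw [NN_comm] at hX'
  by_cases h1 : p ∈ Side L S S1
  · left
    refine hadj p p' hX h1 ?_
    by_contra h2
    exact cross p p' hX h1 (fun k => h2 (Or.inl k)) (fun k => h2 (Or.inr k))
  by_cases h1' : p' ∈ Side L S S1
  · left
    rw [Set.pair_comm]
    refine hadj p' p hX' h1' ?_
    by_contra h2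
    exact cross p' p hX' h1' (fun k => h2 (Or.inl k)) (fun k => h2 (Or.inr k))
  by_cases h2 : p ∈ S ∩ S1
  · by_cases h2' : p' ∈ S ∩ S1
    · have h3 := h2
      have h3' := h2'
      rw [hc] at h3 h3'
      have hcase : (VS L m p p' = S) ∨ (VS L m p p' = S1) := by
        rcases pair_of_mem hC hp hn h3 h3' with ⟨rfl, rfl⟩ | ⟨rfl, rfl⟩ | ⟨rfl, rfl⟩ | ⟨rfl, rfl⟩
        · exact Or.inl hS.symm
        · exact Or.inl (by rw [hS, VS_comm])
        · exact Or.inr hS1.symm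
        · exact Or.inr (by rw [hS1, VS_comm])
      have hsub : {p, p'} ∪ X ⊆ VS L m p p' := by
        rintro v ((rfl | rfl) | hv)
        · exact left_VS
        · exact right_VS
        · exact NN_VS (hX hv)
      rcases hcase with h | h
      · left
        rw [h] at hsub
        exact hsub.trans side1'
      · right
        rw [h] at hsub
        exact fun v hv hv' => side2 hL hG' (hsub hv) hv'
    · right
      rintro v ((rfl | rfl) | hv)
      · exact h1
      · exact h1'
      · exact fun hvs => h1' (side3 hvs (hX hv).2.1.symm h2')
  · right
    rintro v ((rfl | rfl) | hv)
    · exact h1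
    · exact h1'
    · exact fun hvs => h1 (side3 hvs (hX hv).1.1.symm h2)

theorem side4S (hL : IsLabeledS2 L m) {S S1 W : Set E3} (hG : GlueS L m S S1) (hW : IsS L m W) :
    W ⊆ Side L S S1 ∪ (S ∩ S1) ∨ (∀ v ∈ W, v ∉ Side L S S1) := by
  obtain ⟨p, p', hp, hn, rfl, hI⟩ := hW
  have : VS L m p p' = {p, p'} ∪ NN L m p p' := by
    ext v; simp [VS, or_assoc]
  rw [this]
  exact side4 hL hG hp hn subset_rfl hI

theorem side5 (hL : IsLabeledS2 L m) {S S1 : Set E3} (hG : GlueS L m S S1) {a b c d : E3}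
    (hC : Circ L m a b c d) :
    ({a, b, c, d} : Set E3) ⊆ Side L S S1 ∪ (S ∩ S1) ∨
      (∀ v ∈ ({a, b, c, d} : Set E3), v ∉ Side L S S1) := by
  have : ({a, b, c, d} : Set E3) = {a, c} ∪ {b, d} := by ext v; simp; tauto
  rw [this]
  refine side4 hL hG hC.ac hC.nac ?_ (Or.inl ⟨b, by simp, d, by simp, hC.bd, hC.nbd⟩)
  rintro v (rfl | rfl)
  · exact ⟨hC.ab, hC.bc.symm hL⟩
  · exact ⟨hC.da.symm hL, hC.cd⟩

/-- a suspension containing the glueing circuit is one of the two -/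
theorem cc_in (hL : IsLabeledS2 L m) {S S1 W : Set E3} (hG : GlueS L m S S1) (hW : IsS L m W)
    (h : S ∩ S1 ⊆ W) : W = S ∨ W = S1 := by
  obtain ⟨hne, t, t', z, z', hS, hS1, hC, hc⟩ := hG
  obtain ⟨p, p', hp, hn, rfl, hI⟩ := hW
  have hc' := h
  rw [hc] at h
  rcases circ_pos hC (h (by simp)) (h (by simp)) (h (by simp)) (h (by simp)) with
    ⟨rfl, rfl⟩ | ⟨rfl, rfl⟩ | ⟨rfl, rfl⟩ | ⟨rfl, rfl⟩ | ⟨h1, h2, h3, h4⟩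
  · exact Or.inl hS.symm
  · exact Or.inl (by rw [hS, VS_comm])
  · exact Or.inr hS1.symm
  · exact Or.inr (by rw [hS1, VS_comm])
  · exfalso
    have k1 : p ∈ S := by rw [hS]; exact NN_VS (NN_swap hL h1 h3).1
    have k2 : p ∈ S1 := by rw [hS1]; exact NN_VS (NN_swap hL h2 h4).1
    have : p ∈ S ∩ S1 := ⟨k1, k2⟩
    rw [hc] at this
    rcases this with rfl | rfl | rfl | rfl <;> exact NN_not_left (by assumption)

theorem quad_eq {a b c d t t' z z' : E3} (hC : Circ L m a b c d)
    (h : ({a, b, c, d} : Set E3) ⊆ {t, t', z, z'}) : ({t, t', z, z'} : Set E3) ⊆ {a, b, c, d} := by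
  have h4 : ({a, b, c, d} : Finset E3).card = 4 := by
    have := hC.ab.ne
    have := hC.bc.ne
    have := hC.cd.ne
    have := hC.da.ne
    have := hC.ac
    have := hC.bd
    rw [Finset.card_insert_of_notMem, Finset.card_insert_of_notMem, Finset.card_insert_of_notMem,
      Finset.card_singleton] <;> simp <;> grind
  have hs : ({a, b, c, d} : Finset E3) ⊆ {t, t', z, z'} := by
    intro x hx
    have := @h x (by simpa using hx)
    simpa using this
  have := Finset.eq_of_subset_of_card_le hs (by rw [h4]; exact Finset.card_le_four)
  intro x hx
  have hx' : x ∈ ({t, t', z, z'} : Finset E3) := by simpa using hx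
  rw [← this] at hx'
  simpa using hx'

theorem rel_cross (hL : IsLabeledS2 L m) {S S1 W W' : Set E3} (hG : GlueS L m S S1)
    (hW' : IsS L m W') (hR : RelW L m W W') (h1 : W ⊆ Side L S S1 ∪ (S ∩ S1))
    (h2 : ∀ v ∈ W', v ∉ Side L S S1) : W' = S ∨ W' = S1 := by
  refine cc_in hL hG hW' ?_
  obtain ⟨hne, t, t', z, z', hS, hS1, hC, hc⟩ := hG
  obtain ⟨a, b, c, d, hC', hI⟩ := hR
  have : W ∩ W' ⊆ S ∩ S1 := by
    rintro v ⟨hv, hv'⟩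
    exact (h1 hv).resolve_left (h2 v hv')
  rw [hI, hc] at this
  have := quad_eq hC' this
  rw [hc]
  intro v hv
  have := this hv
  rw [← hI] at this
  exact this.2

/-- the full subcomplex on a vertex set -/
def fullC (L : SimplicialComplex ℝ E3) (A : Set E3) : Set (Finset E3) :=
  {F | F ∈ L.faces ∧ ∀ v ∈ F, v ∈ A}

theorem SeifertRel_symm {S S' : Set (Finset E3)} (h : SeifertRel L m S S') : SeifertRel L m S' S := by
  obtain ⟨h1, h2, v, h3, h4⟩ := h
  exact ⟨h2, h1, v, h3, by rw [Set.inter_comm, h4]⟩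

def RW (L : SimplicialComplex ℝ E3) (m : E3 → E3 → ℕ) (W W' : Set E3) : Prop :=
  IsS L m W ∧ IsS L m W' ∧ RelW L m W W' ∧ SeifertRel L m (fullC L W) (fullC L W')

theorem RW.symm {W W' : Set E3} (h : RW L m W W') : RW L m W' W := by
  obtain ⟨h1, h2, ⟨a, b, c, d, h3, h4⟩, h5⟩ := h
  exact ⟨h2, h1, ⟨a, b, c, d, h3, by rw [Set.inter_comm, h4]⟩, SeifertRel_symm h5⟩

theorem RWs_symm {W W' : Set E3} (h : Relation.ReflTransGen (RW L m) W W') :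
    Relation.ReflTransGen (RW L m) W' W := by
  induction h with
  | refl => exact .refl
  | tail _ h ih => exact .head h.symm ih

theorem side6 (hL : IsLabeledS2 L m) {S W : Set E3} (h : Relation.ReflTransGen (RW L m) S W) :
    W = S ∨ ∃ S1, Relation.ReflTransGen (RW L m) S S1 ∧ GlueS L m S S1 ∧
      W ⊆ Side L S1 S ∪ (S1 ∩ S) := by
  induction h with
  | refl => exact Or.inl rfl
  | @tail W W' hp h ih =>
    by_cases hW' : W' = S
    · exact Or.inl hW'
    right
    rcases ih with rfl | ⟨S1, hS1, hG, hW⟩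
    · exact ⟨W', hp.tail h, glue_of_rel hL h.1 h.2.1 (Ne.symm hW') h.2.2.1, side1'⟩
    · rcases side4S hL hG.symm h.2.1 with h1 | h1
      · exact ⟨S1, hS1, hG, h1⟩
      · rcases rel_cross hL hG.symm h.2.1 h.2.2.1 hW h1 with rfl | rfl
        · exact ⟨W', hS1, hG, side1'⟩
        · exact absurd rfl hW'

theorem side7 (hL : IsLabeledS2 L m) {S : Set E3} {a b c d : E3} (hC : Circ L m a b c d)
    (hcov : ∀ v ∈ ({a, b, c, d} : Set E3), ∃ W, Relation.ReflTransGen (RW L m) S W ∧ v ∈ W)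
    (hS : ¬ ({a, b, c, d} : Set E3) ⊆ S) :
    ∃ S1, Relation.ReflTransGen (RW L m) S S1 ∧ GlueS L m S S1 ∧
      ({a, b, c, d} : Set E3) ⊆ Side L S1 S ∪ (S1 ∩ S) ∧
      ¬ ({a, b, c, d} : Set E3) ⊆ Side L S S1 ∪ (S ∩ S1) := by
  rw [Set.not_subset] at hS
  obtain ⟨v, hv, hvS⟩ := hS
  obtain ⟨W, hW, hvW⟩ := hcov v hv
  rcases side6 hL hW with rfl | ⟨S1, h1, hG, h2⟩
  · exact absurd hvW hvS
  · have hvs : v ∈ Side L S1 S := (h2 hvW).resolve_right (fun k => hvS k.2)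
    refine ⟨S1, h1, hG, ?_, ?_⟩
    · rcases side5 hL hG.symm hC with h | h
      · exact h
      · exact absurd hvs (h v hv)
    · intro h
      rcases h hv with h | h
      · exact side2' hL hG hvs h
      · exact hvS h.1

theorem VS_vert {t t' : E3} (htt : InfN L (NN L m t t')) {v : E3} (h : v ∈ VS L m t t') :
    ({v} : Finset E3) ∈ L.faces := by
  have : ∃ a, a ∈ NN L m t t' := by
    rcases htt with ⟨a, ha, _⟩ | ⟨a, ha, _⟩ <;> exact ⟨a, ha⟩
  obtain ⟨a, ha⟩ := this
  rcases h with rfl | rfl | h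
  · exact ha.1.1.vert
  · exact ha.2.1.vert
  · exact h.1.1.symm.vert

theorem side_finite (hL : IsLabeledS2 L m) {S S1 : Set E3} (hG : GlueS L m S S1) :
    (Side L S S1).Finite := by
  refine (verts_finite hL.finite).subset ?_
  rintro v ⟨_, w, hw, hw1, hp⟩
  rcases hp.cases_tail with rfl | ⟨u, _, hu⟩
  · obtain ⟨hne, t, t', z, z', rfl, rfl, hC, hc⟩ := hG
    refine VS_vert (Or.inl ⟨z, ?_, z', ?_, hC.bd, hC.nbd⟩) hw
    · exact ⟨hC.ab, hC.bc.symm hL⟩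
    · exact ⟨hC.da.symm hL, hC.cd⟩
  · exact hu.1.symm.vert

theorem side_grow1 (hL : IsLabeledS2 L m) {S S1 S2 : Set E3} (hG : GlueS L m S S1)
    {t t' : E3} (hS : S = VS L m t t') (ht : t ∈ S1) (ht' : t' ∈ S1) (h2 : t ∉ S2) :
    Side L S S1 ⊂ Side L S1 S2 := by
  have hts : t ∈ Side L S1 S2 := side1 ht h2
  have htn : t ∉ Side L S S1 := fun k => side2 hL hG ht k
  refine (Set.ssubset_iff_of_subset ?_).2 ⟨t, hts, htn⟩
  rintro v ⟨hv, w, hw, hw1, hp⟩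
  have hnot : ∀ u, u ∈ Side L S S1 → u ∉ S1 ∩ S2 := fun u hu k => side2 hL hG k.1 hu
  have hws : w ∈ Side L S1 S2 := by
    refine side3 hts ?_ (hnot w (side1 hw hw1))
    rw [hS] at hw
    refine (mem_VS_not hw ?_ ?_).1.1
    · rintro rfl; exact hw1 ht
    · rintro rfl; exact hw1 ht'
  have : v ∈ Side L S S1 ∧ v ∈ Side L S1 S2 := by
    clear hv
    induction hp with
    | refl => exact ⟨side1 hw hw1, hws⟩
    | @tail b d _ hbd ih =>
      have := side3 ih.1 hbd.1 hbd.2.2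
      exact ⟨this, side3 ih.2 hbd.1 (hnot d this)⟩
  exact this.2

theorem side_grow (hL : IsLabeledS2 L m) {S S1 S2 : Set E3} (hG : GlueS L m S S1)
    (hG2 : GlueS L m S1 S2) (hne : S2 ≠ S) : Side L S S1 ⊂ Side L S1 S2 := by
  have hG' := hG
  obtain ⟨hne1, t, t', z, z', hS, hS1, hC, hc⟩ := hG
  have hcS : ∀ v ∈ ({t, t', z, z'} : Set E3), v ∈ S1 := by
    intro v hv; rw [← hc] at hv; exact hv.2
  have ht := hcS t (by simp)
  have ht' := hcS t' (by simp)
  by_cases h1 : t ∈ S2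
  · by_cases h2 : t' ∈ S2
    · exfalso
      obtain ⟨hne2, p, p', q, q', hS1', hS2, hC2, hc2⟩ := hG2
      have k1 : t ∈ S1 ∩ S2 := ⟨ht, h1⟩
      have k2 : t' ∈ S1 ∩ S2 := ⟨ht', h2⟩
      rw [hc2] at k1 k2
      rcases pair_of_mem hC2 hC.ac hC.nac k1 k2 with ⟨rfl, rfl⟩ | ⟨rfl, rfl⟩ | ⟨rfl, rfl⟩ | ⟨rfl, rfl⟩
      · exact hne1 (hS.trans hS1'.symm)
      · exact hne1 (hS.trans ((VS_comm _ _).trans hS1'.symm))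
      · exact hne (hS2.trans hS.symm)
      · exact hne (hS2.trans ((VS_comm _ _).trans hS.symm))
    · exact side_grow1 hL hG' (hS.trans (VS_comm _ _)) ht' ht h2
  · exact side_grow1 hL hG' hS ht ht' h1

theorem exists_member (hL : IsLabeledS2 L m) {S : Set E3} {a b c d : E3} (hC : Circ L m a b c d)
    (hcov : ∀ v ∈ ({a, b, c, d} : Set E3), ∃ W, Relation.ReflTransGen (RW L m) S W ∧ v ∈ W) :
    ∃ W, Relation.ReflTransGen (RW L m) S W ∧ ({a, b, c, d} : Set E3) ⊆ W := by
  by_contra hno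
  have hno' : ∀ W, Relation.ReflTransGen (RW L m) S W → ¬ ({a, b, c, d} : Set E3) ⊆ W :=
    fun W h1 h2 => hno ⟨W, h1, h2⟩
  have step : ∀ W, Relation.ReflTransGen (RW L m) S W → 
    ∃ S1, Relation.ReflTransGen (RW L m) S S1 ∧ GlueS L m W S1 ∧
      ({a, b, c, d} : Set E3) ⊆ Side L S1 W ∪ (S1 ∩ W) ∧
      ¬ ({a, b, c, d} : Set E3) ⊆ Side L W S1 ∪ (W ∩ S1) := by
    intro W hW
    obtain ⟨S1, h1, h2⟩ := side7 hL hC (S := W) (fun v hv => by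
      obtain ⟨W', h1, h2⟩ := hcov v hv
      exact ⟨W', (RWs_symm hW).trans h1, h2⟩) (hno' W hW)
    exact ⟨S1, hW.trans h1, h2⟩
  have main : ∀ n : ℕ, ∃ W S1, Relation.ReflTransGen (RW L m) S S1 ∧ GlueS L m W S1 ∧
      ({a, b, c, d} : Set E3) ⊆ Side L S1 W ∪ (S1 ∩ W) ∧
      ¬ ({a, b, c, d} : Set E3) ⊆ Side L W S1 ∪ (W ∩ S1) ∧ n ≤ (Side L W S1).ncard := by
    intro n
    induction n with
    | zero =>
      obtain ⟨S1, h1, h2, h3, h4⟩ := step S .refl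
      exact ⟨S, S1, h1, h2, h3, h4, Nat.zero_le _⟩
    | succ n ih =>
      obtain ⟨W, S1, h1, h2, h3, h4, h5⟩ := ih
      obtain ⟨S2, k1, k2, k3, k4⟩ := step S1 h1
      have hne : S2 ≠ W := by
        rintro rfl
        exact k4 h3
      have := Set.ncard_lt_ncard (side_grow hL h2 k2 hne) (side_finite hL k2)
      exact ⟨S1, S2, k1, k2, k3, k4, by omega⟩
  obtain ⟨W, S1, h1, h2, h3, h4, h5⟩ := main ({v : E3 | ({v} : Finset E3) ∈ L.faces}.ncard + 1)
  have : Side L W S1 ⊆ {v : E3 | ({v} : Finset E3) ∈ L.faces} := by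
    rintro v ⟨_, w, hw, hw1, hp⟩
    rcases hp.cases_tail with rfl | ⟨u, _, hu⟩
    · obtain ⟨hne, t, t', z, z', rfl, rfl, hC, hc⟩ := h2
      refine VS_vert (Or.inl ⟨z, ?_, z', ?_, hC.bd, hC.nbd⟩) hw
      · exact ⟨hC.ab, hC.bc.symm hL⟩
      · exact ⟨hC.da.symm hL, hC.cd⟩
    · exact hu.1.symm.vert
  have := Set.ncard_le_ncard this (verts_finite hL.finite)
  omega

theorem flag2 (hL : IsLabeledS2 L m) (hflag : MetricFlag L m) {t a b : E3}
    (h1 : Adj2 L m t a) (h2 : Adj2 L m t b) (h3 : Adj L a b) : ({t, a, b} : Finset E3) ∈ L.faces := by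
  rw [hflag t a b h1.ne h3.1 h2.ne h1.1.2 h3.2 h2.1.2, h1.2, (h2.symm hL).2]
  have h := hL.two_le a b h3.1 h3.2
  have : (0 : ℝ) < 1 / (m a b : ℝ) := by
    have : (0 : ℝ) < m a b := by exact_mod_cast (by omega)
    positivity
  push_cast
  linarith

theorem circ_of_eucl (hL : IsLabeledS2 L m) (hflag : MetricFlag L m) {v : Fin 4 → E3}
    (hv : IsEuclidean4Circuit L m v) : Circ L m (v 0) (v 1) (v 2) (v 3) := by
  obtain ⟨hinj, hf, hm, hn⟩ := hv
  have a01 : Adj2 L m (v 0) (v 1) := ⟨⟨hinj.ne (by decide), hf 0⟩, hm 0⟩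
  have a12 : Adj2 L m (v 1) (v 2) := ⟨⟨hinj.ne (by decide), hf 1⟩, hm 1⟩
  have a23 : Adj2 L m (v 2) (v 3) := ⟨⟨hinj.ne (by decide), hf 2⟩, hm 2⟩
  have a30 : Adj2 L m (v 3) (v 0) := ⟨⟨hinj.ne (by decide), hf 3⟩, hm 3⟩
  refine ⟨hinj.ne (by decide), hinj.ne (by decide), ?_, ?_, a01, a12, a23, a30⟩
  · intro h
    refine hn (Or.inl ⟨?_, ?_⟩)
    · have := flag2 hL hflag (a01.symm hL) a12 h
      rwa [Finset.insert_comm] at this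
    · have := flag2 hL hflag a30 (a23.symm hL) h
      rwa [Finset.insert_comm, Finset.pair_comm (v 3)] at this
  · intro h
    refine hn (Or.inr ⟨?_, ?_⟩)
    · have := flag2 hL hflag (a12.symm hL) a23 h
      rwa [Finset.insert_comm] at this
    · exact flag2 hL hflag a01 (a30.symm hL) h

theorem no_NP (hL : IsLabeledS2 L m) (hflag : MetricFlag L m) {t t' a b c : E3} (htt : t ≠ t')
    (ha : a ∈ NN L m t t') (hb : b ∈ NN L m t t') (hc : c ∈ NN L m t t')
    (hab : a ≠ b) (hac : a ≠ c) (hbc : b ≠ c) (hF : ({a, b, c} : Finset E3) ∈ L.faces) : False := by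
  obtain ⟨e⟩ := hL.sphere
  have habf : Adj L a b := ⟨hab, L.down_closed hF (by intro x; simp; tauto) (by simp)⟩
  have h1 := flag2 hL hflag ha.1 hb.1 habf
  have h2 := flag2 hL hflag ha.2 hb.2 habf
  have r : ∀ t : E3, ({t, a, b} : Finset E3) = {a, b, t} := by intro t; ext x; simp; tauto
  rw [r] at h1 h2
  refine no_three_triangles e hab ![c, t, t'] ?_ ?_ ?_ ?_
  · intro i j hij
    have := hc.1.ne
    have := hc.2.ne
    fin_cases i <;> fin_cases j <;> simp_all
  · intro i
    fin_cases i
    · exact hac.symm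
    · exact ha.1.ne
    · exact ha.2.ne
  · intro i
    fin_cases i
    · exact hbc.symm
    · exact hb.1.ne
    · exact hb.2.ne
  · intro i
    fin_cases i
    · exact hF
    · exact h1
    · exact h2

theorem cone_face (hL : IsLabeledS2 L m) (hflag : MetricFlag L m) {t t' : E3} (htt : t ≠ t')
    {F : Finset E3} (hF : F ∈ fullC L (NN L m t t')) : insert t F ∈ L.faces := by
  obtain ⟨hFf, hFN⟩ := hF
  have hne := L.nonempty_of_mem_faces hFf
  have h3 : F.card < 3 := by
    by_contra hcard
    rw [not_lt] at hcard
    obtain ⟨G, hG, hGc⟩ := Finset.exists_subset_card_eq hcard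
    obtain ⟨a, b, c, hab, hac, hbc, rfl⟩ := Finset.card_eq_three.1 hGc
    exact no_NP hL hflag htt (hFN a (hG (by simp))) (hFN b (hG (by simp))) (hFN c (hG (by simp)))
      hab hac hbc (L.down_closed hFf hG (by simp))
  have h0 : 0 < F.card := hne.card_pos
  have : F.card = 1 ∨ F.card = 2 := by omega
  rcases this with h | h
  · obtain ⟨a, rfl⟩ := Finset.card_eq_one.1 h
    exact (hFN a (by simp)).1.1.2
  · obtain ⟨a, b, hab, rfl⟩ := Finset.card_eq_two.1 h
    exact flag2 hL hflag (hFN a (by simp)).1 (hFN b (by simp)).1 ⟨hab, hFf⟩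

theorem full_VS (hL : IsLabeledS2 L m) (hflag : MetricFlag L m) {t t' : E3} (htt : t ≠ t')
    (hn : ¬ Adj L t t') (hne : (NN L m t t').Nonempty) :
    IsRASuspData L m (fullC L (VS L m t t')) (fullC L (NN L m t t')) t t' := by
  obtain ⟨a, ha⟩ := hne
  refine ⟨fun F hF => hF.1, fun F hF => hF.1, ?_, ?_, htt, ?_, ?_, ?_, ?_⟩
  · intro F hF G hG hGn
    exact ⟨L.down_closed hF.1 hG hGn, fun v hv => hF.2 v (hG hv)⟩
  · exact ⟨{a}, ha.1.1.symm.vert, by simpa using ha⟩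
  · intro F hF h
    exact NN_not_left (hF.2 t h)
  · intro F hF h
    exact NN_not_right (hF.2 t' h)
  · intro v hv
    have := hv.2 v (by simp)
    exact ⟨this.1.2, this.2.2⟩
  · ext F
    constructor
    · rintro ⟨hF, hFV⟩
      by_cases h1 : t ∈ F
      · have h2 : t' ∉ F := fun h2 => hn ⟨htt, L.down_closed hF (by
          intro x; simp; rintro (rfl | rfl) <;> assumption) (by simp)⟩
        by_cases he : (F.erase t).Nonempty
        · refine Or.inl (Or.inr ⟨F.erase t, ⟨L.down_closed hF (Finset.erase_subset _ _) he, ?_⟩,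
            Finset.insert_erase h1⟩)
          intro v hv
          rw [Finset.mem_erase] at hv
          exact mem_VS_not (hFV v hv.2) hv.1 (by rintro rfl; exact h2 hv.2)
        · rw [Finset.not_nonempty_iff_eq_empty, Finset.erase_eq_empty_iff] at he
          rcases he with rfl | rfl
          · simp at h1
          · exact Or.inl (Or.inl (Or.inr (Or.inl rfl)))
      · by_cases h2 : t' ∈ F
        · by_cases he : (F.erase t').Nonempty
          · refine Or.inr ⟨F.erase t', ⟨L.down_closed hF (Finset.erase_subset _ _) he, ?_⟩,
              Finset.insert_erase h2⟩
            intro v hv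
            rw [Finset.mem_erase] at hv
            exact mem_VS_not (hFV v hv.2) (by rintro rfl; exact h1 hv.2) hv.1
          · rw [Finset.not_nonempty_iff_eq_empty, Finset.erase_eq_empty_iff] at he
            rcases he with rfl | rfl
            · simp at h2
            · exact Or.inl (Or.inl (Or.inr (Or.inr rfl)))
        · refine Or.inl (Or.inl (Or.inl ⟨hF, fun v hv => mem_VS_not (hFV v hv) ?_ ?_⟩))
          · rintro rfl; exact h1 hv
          · rintro rfl; exact h2 hv
    · rintro (((h | h | h) | ⟨G, hG, rfl⟩) | ⟨G, hG, rfl⟩)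
      · exact ⟨h.1, fun v hv => NN_VS (h.2 v hv)⟩
      · rw [h]; exact ⟨ha.1.1.vert, by intro v hv; rw [Finset.mem_singleton.1 hv]; exact left_VS⟩
      · rw [Set.mem_singleton_iff] at h
        rw [h]; exact ⟨ha.2.1.vert, by intro v hv; rw [Finset.mem_singleton.1 hv]; exact right_VS⟩
      · refine ⟨cone_face hL hflag htt hG, ?_⟩
        intro v hv
        rcases Finset.mem_insert.1 hv with rfl | hv
        · exact left_VS
        · exact NN_VS (hG.2 v hv)
      · rw [NN_comm] at hG
        refine ⟨cone_face hL hflag htt.symm hG, ?_⟩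
        intro v hv
        rw [VS_comm]
        rcases Finset.mem_insert.1 hv with rfl | hv
        · exact left_VS
        · exact NN_VS (hG.2 v hv)

theorem data_Z {T Z : Set (Finset E3)} {p p' : E3} (h : IsRASuspData L m T Z p p') {F : Finset E3}
    (hF : F ∈ Z) {w : E3} (hw : w ∈ F) : ({w} : Finset E3) ∈ Z ∧ w ∈ NN L m p p' := by
  have hz : ({w} : Finset E3) ∈ Z := h.zdown F hF _ (by simpa using hw) (by simp)
  refine ⟨hz, ⟨⟨?_, h.subset ?_⟩, (h.labels w hz).1⟩, ⟨⟨?_, h.subset ?_⟩, (h.labels w hz).2⟩⟩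
  · rintro rfl; exact h.t_notin F hF hw
  · rw [h.eq]; exact Or.inl (Or.inr ⟨_, hz, rfl⟩)
  · rintro rfl; exact h.t'_notin F hF hw
  · rw [h.eq]; exact Or.inr ⟨_, hz, rfl⟩

theorem data_VS {T Z : Set (Finset E3)} {p p' : E3} (h : IsRASuspData L m T Z p p') {F : Finset E3}
    (hF : F ∈ T) {w : E3} (hw : w ∈ F) : w ∈ VS L m p p' := by
  rw [h.eq] at hF
  rcases hF with ((h1 | h1 | h1) | ⟨G, hG, rfl⟩) | ⟨G, hG, rfl⟩
  · exact NN_VS (data_Z h h1 hw).2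
  · rw [h1] at hw; rw [Finset.mem_singleton.1 hw]; exact left_VS
  · rw [Set.mem_singleton_iff] at h1
    rw [h1] at hw; rw [Finset.mem_singleton.1 hw]; exact right_VS
  · rcases Finset.mem_insert.1 hw with rfl | hw
    · exact left_VS
    · exact NN_VS (data_Z h hG hw).2
  · rcases Finset.mem_insert.1 hw with rfl | hw
    · exact right_VS
    · exact NN_VS (data_Z h hG hw).2

theorem InfN.mono {X Y : Set E3} (h : InfN L X) (hs : X ⊆ Y) : InfN L Y := by
  rcases h with ⟨a, ha, b, hb, h⟩ | ⟨a, ha, b, hb, c, hc, h⟩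
  · exact Or.inl ⟨a, hs ha, b, hs hb, h⟩
  · exact Or.inr ⟨a, hs ha, b, hs hb, c, hs hc, h⟩

theorem InfN.nonempty {X : Set E3} (h : InfN L X) : X.Nonempty := by
  rcases h with ⟨a, ha, _⟩ | ⟨a, ha, _⟩ <;> exact ⟨a, ha⟩

theorem sub_pair {G : Finset E3} {u v : E3} (hs : ∀ w ∈ G, w = u ∨ w = v) (hn : G.Nonempty) :
    G = {u} ∨ G = {v} ∨ G = {u, v} := by
  by_cases k1 : u ∈ G
  · by_cases k2 : v ∈ G
    · right; right
      refine Finset.Subset.antisymm ?_ ?_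
      · intro w hw
        rw [Finset.mem_insert, Finset.mem_singleton]
        exact hs w hw
      · intro w hw
        rw [Finset.mem_insert, Finset.mem_singleton] at hw
        rcases hw with rfl | rfl <;> assumption
    · left
      rw [Finset.eq_singleton_iff_unique_mem]
      refine ⟨k1, fun w hw => ?_⟩
      rcases hs w hw with h | h
      · exact h
      · rw [h] at hw; exact absurd hw k2
  · right; left
    rw [Finset.eq_singleton_iff_nonempty_unique_mem]
    refine ⟨hn, fun w hw => ?_⟩
    rcases hs w hw with h | h
    · rw [h] at hw; exact absurd hw k1
    · exact h

theorem base_InfN {Z : Set (Finset E3)} (hZf : Z ⊆ L.faces)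
    (hdown : ∀ F ∈ Z, ∀ G : Finset E3, G ⊆ F → G.Nonempty → G ∈ Z) (hne : Z.Nonempty)
    (hinf : InfiniteBase Z) (hfull : IsFullSubcomplex L Z) :
    InfN L {v | ({v} : Finset E3) ∈ Z} := by
  have hsub : ∀ F ∈ Z, ∀ w ∈ F, ({w} : Finset E3) ∈ Z := fun F hF w hw =>
    hdown F hF _ (by simpa using hw) (by simp)
  by_contra hno
  unfold InfN at hno
  push Not at hno
  obtain ⟨hno1, hno2⟩ := hno
  obtain ⟨F, hF⟩ := hne
  obtain ⟨v, hv⟩ := L.nonempty_of_mem_faces (hZf hF)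
  have hvZ := hsub F hF v hv
  by_cases h1 : ∃ u, u ≠ v ∧ ({u} : Finset E3) ∈ Z
  · obtain ⟨u, huv, huZ⟩ := h1
    apply hinf.2
    have hadj := hno1 u huZ v hvZ huv
    have hall : ∀ w, ({w} : Finset E3) ∈ Z → w = u ∨ w = v := by
      intro w hw
      by_contra hw'
      push Not at hw'
      exact hw'.2 (hno2 u huZ w hw v hvZ hw'.1.symm huv).symm.symm
    have hpair : ({u, v} : Finset E3) ∈ Z := hfull.2 _ hadj.2 (by
      intro w hw
      simp only [Finset.mem_insert, Finset.mem_singleton] at hw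
      rcases hw with rfl | rfl <;> assumption)
    refine ⟨u, v, huv, ?_⟩
    ext G
    simp only [Set.mem_insert_iff, Set.mem_singleton_iff]
    constructor
    · intro hG
      have hGne := L.nonempty_of_mem_faces (hZf hG)
      exact sub_pair (fun w hw => hall w (hsub G hG w hw)) hGne
    · rintro (rfl | rfl | rfl) <;> assumption
  · push Not at h1
    apply hinf.1
    refine ⟨v, ?_⟩
    ext G
    rw [Set.mem_singleton_iff]
    constructor
    · intro hG
      have hGne := L.nonempty_of_mem_faces (hZf hG)
      rw [Finset.eq_singleton_iff_nonempty_unique_mem]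
      refine ⟨hGne, fun w hw => ?_⟩
      by_contra hwv
      exact h1 w hwv (hsub G hG w hw)
    · rintro rfl; exact hvZ

theorem struct (hL : IsLabeledS2 L m) (hflag : MetricFlag L m) {S : Set (Finset E3)}
    (hS : IsInfMaxRASusp L m S) : ∃ t t', t ≠ t' ∧ ¬ Adj L t t' ∧ S = fullC L (VS L m t t') ∧
      InfN L (NN L m t t') := by
  obtain ⟨⟨Z, t, t', hd, hinf, hfull⟩, hmax⟩ := hS
  have hI := base_InfN hd.zsubset hd.zdown hd.znonempty hinf hfull
  have hZN : {v | ({v} : Finset E3) ∈ Z} ⊆ NN L m t t' := fun v hv =>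
    (data_Z hd hv (Finset.mem_singleton_self v)).2
  obtain ⟨e⟩ := hL.sphere
  have hn : ¬ Adj L t t' := by
    intro hadj
    have tri : ∀ a, ({a} : Finset E3) ∈ Z → ({a, t, t'} : Finset E3) ∈ L.faces := fun a ha =>
      flag2 hL hflag ((hZN ha).1.symm hL) ((hZN ha).2.symm hL) hadj
    have no3 : ∀ a b c, ({a} : Finset E3) ∈ Z → ({b} : Finset E3) ∈ Z → ({c} : Finset E3) ∈ Z →
        a ≠ b → a ≠ c → b ≠ c → False := by
      intro a b c ha hb hc hab hac hbc
      have r : ∀ a : E3, ({a, t, t'} : Finset E3) = {t, t', a} := by intro t; ext x; simp; tauto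
      refine no_three_triangles e hadj.1 ![a, b, c] ?_ ?_ ?_ ?_
      · intro i j hij
        fin_cases i <;> fin_cases j <;> simp_all
      · intro i
        fin_cases i
        · exact (hZN ha).1.ne.symm
        · exact (hZN hb).1.ne.symm
        · exact (hZN hc).1.ne.symm
      · intro i
        fin_cases i
        · exact (hZN ha).2.ne.symm
        · exact (hZN hb).2.ne.symm
        · exact (hZN hc).2.ne.symm
      · intro i
        rw [← r]
        fin_cases i
        · exact tri a ha
        · exact tri b hb
        · exact tri c hc
    rcases hI with ⟨a, ha, b, hb, hab, hnab⟩ | ⟨a, ha, b, hb, c, hc, h1, h2, h3⟩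
    swap
    · exact no3 a b c ha hb hc h1 h2 h3
    have hall : ∀ w, ({w} : Finset E3) ∈ Z → w = a ∨ w = b := by
      intro w hw
      by_contra hw'
      push Not at hw'
      exact no3 a b w ha hb hw hab hw'.1.symm hw'.2.symm
    have haN := hZN ha
    have hbN := hZN hb
    have ta := tri a ha
    have tb := tri b hb
    set Z' : Set (Finset E3) := {{t}, {t'}, {t, t'}} with hZ'
    have hdata : IsRASuspData L m (joinSusp Z' a b) Z' a b := by
      refine ⟨?_, ?_, ?_, ⟨{t}, by simp [hZ']⟩, hab, ?_, ?_, ?_, rfl⟩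
      · rintro F (((h | h | h) | ⟨G, hG, rfl⟩) | ⟨G, hG, rfl⟩)
        · rcases h with rfl | rfl | rfl
          · exact haN.1.1.vert
          · exact haN.2.1.vert
          · exact hadj.2
        · rw [h]; exact hd.zsubset ha
        · rw [Set.mem_singleton_iff] at h; rw [h]; exact hd.zsubset hb
        · rcases hG with rfl | rfl | rfl
          · exact haN.1.1.symm.2
          · exact haN.2.1.symm.2
          · exact ta
        · rcases hG with rfl | rfl | rfl
          · exact hbN.1.1.symm.2
          · exact hbN.2.1.symm.2
          · exact tb
      · rintro F (rfl | rfl | rfl)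
        · exact haN.1.1.vert
        · exact haN.2.1.vert
        · exact hadj.2
      · intro F hF G hGF hGn
        have hGs : G ⊆ {t, t'} := by
          refine hGF.trans ?_
          rcases hF with rfl | rfl | rfl <;> simp
        exact sub_pair (fun w hw => by simpa using hGs hw) hGn
      · have h1 := haN.1.ne
        have h2 := haN.2.ne
        rintro F (rfl | rfl | rfl) <;> simp <;> grind
      · have h1 := hbN.1.ne
        have h2 := hbN.2.ne
        rintro F (rfl | rfl | rfl) <;> simp <;> grind
      · intro w hw
        have hw' : w = t ∨ w = t' := by
          rcases hw with h | h | h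
          · left; simpa using h
          · right; simpa using h
          · have : t ∈ ({w} : Finset E3) := by rw [h]; simp
            left; exact (Finset.mem_singleton.1 this).symm
        rcases hw' with rfl | rfl
        · exact ⟨(haN.1.symm hL).2, (hbN.1.symm hL).2⟩
        · exact ⟨(haN.2.symm hL).2, (hbN.2.symm hL).2⟩
    have hZsub : ∀ F ∈ Z, F = {a} ∨ F = {b} := by
      intro F hF
      have hFn := L.nonempty_of_mem_faces (hd.zsubset hF)
      have hFs : ∀ w ∈ F, w = a ∨ w = b := fun w hw => hall w (data_Z hd hF hw).1
      have hnot : ¬ (a ∈ F ∧ b ∈ F) := fun ⟨h1, h2⟩ => hnab ⟨hab, L.down_closed (hd.zsubset hF)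
        (by intro w; simp; rintro (rfl | rfl) <;> assumption) (by simp)⟩
      rcases sub_pair hFs hFn with h | h | h
      · exact Or.inl h
      · exact Or.inr h
      · exact absurd ⟨by rw [h]; simp, by rw [h]; simp⟩ hnot
    have hsub : S ⊆ joinSusp Z' a b := by
      rw [hd.eq]
      rintro F (((h | h | h) | ⟨G, hG, rfl⟩) | ⟨G, hG, rfl⟩)
      · rcases hZsub F h with rfl | rfl
        · exact Or.inl (Or.inl (Or.inr (Or.inl rfl)))
        · exact Or.inl (Or.inl (Or.inr (Or.inr rfl)))
      · exact Or.inl (Or.inl (Or.inl (Or.inl h)))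
      · exact Or.inl (Or.inl (Or.inl (Or.inr (Or.inl h))))
      · rcases hZsub G hG with rfl | rfl
        · exact Or.inl (Or.inr ⟨{t}, by simp [hZ'], Finset.pair_comm _ _⟩)
        · exact Or.inr ⟨{t}, by simp [hZ'], Finset.pair_comm _ _⟩
      · rcases hZsub G hG with rfl | rfl
        · exact Or.inl (Or.inr ⟨{t'}, by simp [hZ'], Finset.pair_comm _ _⟩)
        · exact Or.inr ⟨{t'}, by simp [hZ'], Finset.pair_comm _ _⟩
    have heq := hmax _ ⟨Z', a, b, hdata⟩ hsub
    have hmem : ({a, t, t'} : Finset E3) ∈ S := by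
      rw [heq]
      exact Or.inl (Or.inr ⟨{t, t'}, by simp [hZ'], rfl⟩)
    rw [hd.eq] at hmem
    have htne := hd.tne
    have m1 : t ∈ ({a, t, t'} : Finset E3) := by simp
    have m2 : t' ∈ ({a, t, t'} : Finset E3) := by simp
    rcases hmem with ((h | h | h) | ⟨G, hG, h⟩) | ⟨G, hG, h⟩
    · exact hd.t_notin _ h m1
    · rw [h] at m2; exact htne (Finset.mem_singleton.1 m2).symm
    · rw [Set.mem_singleton_iff] at h
      rw [h] at m1; exact htne (by simpa using m1)
    · rw [← h] at m2
      rcases Finset.mem_insert.1 m2 with k | k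
      · exact htne k.symm
      · exact hd.t'_notin G hG k
    · rw [← h] at m1
      rcases Finset.mem_insert.1 m1 with k | k
      · exact htne k
      · exact hd.t_notin G hG k
  refine ⟨t, t', hd.tne, hn, ?_, hI.mono hZN⟩
  exact hmax _ ⟨_, t, t', full_VS hL hflag hd.tne hn (hI.mono hZN).nonempty⟩
    (fun F hF => ⟨hd.subset hF, fun w hw => data_VS hd hF hw⟩)

def vs (S : Set (Finset E3)) : Set E3 := {v | ({v} : Finset E3) ∈ S}

theorem vs_struct (hL : IsLabeledS2 L m) (hflag : MetricFlag L m) {S : Set (Finset E3)}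
    (hS : IsInfMaxRASusp L m S) : IsS L m (vs S) ∧ fullC L (vs S) = S := by
  obtain ⟨t, t', h1, h2, h3, h4⟩ := struct hL hflag hS
  have : vs S = VS L m t t' := by
    ext v
    rw [h3]
    constructor
    · intro h; exact h.2 v (by simp)
    · intro h; exact ⟨VS_vert h4 h, by simpa using h⟩
  rw [this]
  exact ⟨⟨t, t', h1, h2, rfl, h4⟩, h3.symm⟩

theorem rel_to_RW (hL : IsLabeledS2 L m) (hflag : MetricFlag L m) {S S' : Set (Finset E3)}
    (h : SeifertRel L m S S') : RW L m (vs S) (vs S') := by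
  have h0 := h
  obtain ⟨h1, h2, v, hv, hI⟩ := h
  obtain ⟨k1, k2⟩ := vs_struct hL hflag h1
  obtain ⟨k1', k2'⟩ := vs_struct hL hflag h2
  refine ⟨k1, k1', ⟨v 0, v 1, v 2, v 3, circ_of_eucl hL hflag hv, ?_⟩, by rw [k2, k2']; exact h0⟩
  ext x
  have : x ∈ vs S ∩ vs S' ↔ ({x} : Finset E3) ∈ circuitComplex v := by rw [← hI]; rfl
  rw [this]
  constructor
  · rintro (⟨i, hi⟩ | ⟨i, hi⟩)
    · have : x = v i := by simpa using hi
      rw [this]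
      fin_cases i <;> simp
    · have : v i ∈ ({x} : Finset E3) := by rw [hi]; simp
      have : x = v i := (Finset.mem_singleton.1 this).symm
      rw [this]
      fin_cases i <;> simp
  · rintro (rfl | rfl | rfl | rfl)
    · exact Or.inl ⟨0, rfl⟩
    · exact Or.inl ⟨1, rfl⟩
    · exact Or.inl ⟨2, rfl⟩
    · exact Or.inl ⟨3, rfl⟩

theorem eqv_to_RW (hL : IsLabeledS2 L m) (hflag : MetricFlag L m) {S S' : Set (Finset E3)}
    (h : Relation.EqvGen (SeifertRel L m) S S') : Relation.ReflTransGen (RW L m) (vs S) (vs S') := by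
  induction h with
  | rel _ _ h => exact .single (rel_to_RW hL hflag h)
  | refl => exact .refl
  | symm _ _ _ ih => exact RWs_symm ih
  | trans _ _ _ _ _ ih1 ih2 => exact ih1.trans ih2

theorem RW_to_eqv {W W' : Set E3} (h : Relation.ReflTransGen (RW L m) W W') :
    Relation.EqvGen (SeifertRel L m) (fullC L W) (fullC L W') := by
  induction h with
  | refl => exact .refl _
  | tail _ h ih => exact ih.trans _ _ _ (.rel _ _ h.2.2.2)

theorem class_member {W0 W : Set E3} (hW0 : IsInfMaxRASusp L m (fullC L W0))
    (h : Relation.ReflTransGen (RW L m) W0 W) : IsInfMaxRASusp L m (fullC L W) := by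
  rcases h.cases_tail with rfl | ⟨u, _, hu⟩
  · exact hW0
  · exact hu.2.2.2.2.1

theorem sing_mem {X : Set E3} {w : E3} : ({w} : Finset E3) ∈ fullC L X ↔ ({w} : Finset E3) ∈ L.faces ∧ w ∈ X := by
  constructor
  · intro h; exact ⟨h.1, h.2 w (Finset.mem_singleton_self w)⟩
  · intro h; refine ⟨h.1, fun u hu => ?_⟩
    rw [Finset.mem_singleton.1 hu]; exact h.2

theorem infbase {X : Set E3} {b d : E3} (hb : b ∈ X) (hd : d ∈ X) (vb : ({b} : Finset E3) ∈ L.faces)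
    (vd : ({d} : Finset E3) ∈ L.faces) (hbd : b ≠ d) (hn : ¬ Adj L b d) :
    InfiniteBase (fullC L X) := by
  have mb : ({b} : Finset E3) ∈ fullC L X := sing_mem.2 ⟨vb, hb⟩
  have md : ({d} : Finset E3) ∈ fullC L X := sing_mem.2 ⟨vd, hd⟩
  constructor
  · rintro ⟨w, hw⟩
    rw [hw, Set.mem_singleton_iff, Finset.singleton_inj] at mb md
    exact hbd (mb.trans md.symm)
  · rintro ⟨p, q, hpq, hw⟩
    have key : ∀ r : E3, ({r} : Finset E3) ∈ fullC L X → r = p ∨ r = q := by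
      intro r hr
      rw [hw] at hr
      rcases hr with h | h | h
      · left; exact Finset.singleton_inj.1 h
      · right; exact Finset.singleton_inj.1 h
      · have : p ∈ ({r} : Finset E3) := by rw [h]; simp
        left; exact (Finset.mem_singleton.1 this).symm
    have hpqf : Adj L p q := ⟨hpq, by
      have : ({p, q} : Finset E3) ∈ fullC L X := by rw [hw]; right; right; rfl
      exact this.1⟩
    rcases key b mb with h1 | h1 <;> rcases key d md with h2 | h2
    · exact hbd (h1.trans h2.symm)
    · rw [h1, h2] at hn; exact hn hpqf
    · rw [h1, h2] at hn; exact hn hpqf.symm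
    · exact hbd (h1.trans h2.symm)

theorem caseB_no (hL : IsLabeledS2 L m) (hflag : MetricFlag L m) {a b c d x : E3}
    (hC : Circ L m a b c d) (hI : IsInfMaxRASusp L m (fullC L (VS L m b d)))
    (hx : x ∈ NN L m a c) (hxW : x ∉ VS L m b d) (y : E3) (hy1 : y ∈ NN L m b d)
    (hy2 : y ∈ NN L m a c) : False := by
  obtain ⟨e⟩ := hL.sphere
  have ba : Adj2 L m b a := hC.ab.symm hL
  have hbN : b ∈ NN L m a c := ⟨hC.ab, hC.bc.symm hL⟩
  have hdN : d ∈ NN L m a c := ⟨hC.da.symm hL, hC.cd⟩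
  have haN : a ∈ NN L m b d := ⟨ba, hC.da⟩
  have hcN : c ∈ NN L m b d := ⟨hC.bc, hC.cd.symm hL⟩
  have hsub : VS L m b d ⊆ VS L m a c := by
    intro u hu
    by_contra hn
    have n1 : u ≠ a := by rintro rfl; exact hn left_VS
    have n2 : u ≠ c := by rintro rfl; exact hn right_VS
    have n3 : u ≠ y := by rintro rfl; exact hn (NN_VS hy2)
    have n4 : u ≠ b := by rintro rfl; exact hn (NN_VS hbN)
    have n5 : u ≠ d := by rintro rfl; exact hn (NN_VS hdN)
    have huN := mem_VS_not hu n4 n5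
    have x1 : x ≠ b := by rintro rfl; exact hxW left_VS
    have x2 : x ≠ d := by rintro rfl; exact hxW right_VS
    have x3 : x ≠ y := by rintro rfl; exact hxW (NN_VS hy1)
    have x4 : x ≠ u := by rintro rfl; exact hxW hu
    refine no_Q e (t := b) (t' := d) (z := a) (z' := c) (y := y) (u := u) (x := x) ?_
      hy1.2.1 hy2.2.1 hC.bc.1.symm hC.da.1 (flag2 hL hflag ba hy1.1 hy2.1.1) huN.1.1.symm huN.2.1
      hx.1.1.symm hx.2.1
    simp only [List.nodup_cons, List.mem_cons, List.not_mem_nil, not_or, List.nodup_nil, or_false,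
      not_false_iff, and_true]
    exact ⟨⟨hC.bd, ba.ne, hC.bc.ne, hy1.1.ne, n4.symm, x1.symm⟩,
      ⟨hC.da.ne, hC.cd.ne.symm, hy1.2.ne, n5.symm, x2.symm⟩,
      ⟨hC.ac, hy2.1.ne, n1.symm, hx.1.ne⟩, ⟨hy2.2.ne, n2.symm, hx.2.ne⟩, ⟨n3.symm, x3.symm⟩, x4.symm⟩
  have heq := hI.2 _ ⟨_, a, c, full_VS hL hflag hC.ac hC.nac ⟨b, hbN⟩⟩
    (fun F hF => ⟨hF.1, fun w hw => hsub (hF.2 w hw)⟩)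
  have : ({x} : Finset E3) ∈ fullC L (VS L m a c) := sing_mem.2 ⟨hx.1.1.symm.vert, NN_VS hx⟩
  rw [← heq] at this
  exact hxW (sing_mem.1 this).2

theorem caseB (hL : IsLabeledS2 L m) (hflag : MetricFlag L m) {v : Fin 4 → E3} {x : E3}
    (hv : IsEuclidean4Circuit L m v) (hI : IsInfMaxRASusp L m (fullC L (VS L m (v 1) (v 3))))
    (hx : x ∈ NN L m (v 0) (v 2)) (hxW : x ∉ VS L m (v 1) (v 3)) :
    SeifertRel L m (fullC L (VS L m (v 1) (v 3))) (fullC L (VS L m (v 0) (v 2))) := by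
  have hC := circ_of_eucl hL hflag hv
  have hno := caseB_no hL hflag hC hI hx hxW
  have hbN : v 1 ∈ NN L m (v 0) (v 2) := ⟨hC.ab, hC.bc.symm hL⟩
  have hdN : v 3 ∈ NN L m (v 0) (v 2) := ⟨hC.da.symm hL, hC.cd⟩
  have haN : v 0 ∈ NN L m (v 1) (v 3) := ⟨hC.ab.symm hL, hC.da⟩
  have hcN : v 2 ∈ NN L m (v 1) (v 3) := ⟨hC.bc, hC.cd.symm hL⟩
  have hdata := full_VS hL hflag hC.ac hC.nac ⟨v 1, hbN⟩
  have vb : ({v 1} : Finset E3) ∈ L.faces := hC.bc.1.vert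
  have vd : ({v 3} : Finset E3) ∈ L.faces := hC.da.1.vert
  have vvert : ∀ i, ({v i} : Finset E3) ∈ L.faces := fun i =>
    L.down_closed (hv.2.1 i) (by intro w; simp; tauto) (by simp)
  refine ⟨hI, ⟨⟨_, _, _, hdata, infbase hbN hdN vb vd hC.bd hC.nbd, fun F hF => hF.1,
    fun F hF h => ⟨hF, fun w hw => (sing_mem.1 (h w hw)).2⟩⟩, ?_⟩, v, hv, ?_⟩
  · rintro T ⟨Z, p, p', hT⟩ hsub
    have hVS : ∀ w, w ∈ VS L m (v 0) (v 2) → ({w} : Finset E3) ∈ L.faces → w ∈ VS L m p p' :=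
      fun w hw hf => data_VS hT (hsub (sing_mem.2 ⟨hf, hw⟩)) (Finset.mem_singleton_self w)
    have hxp : x ∈ VS L m p p' := hVS x (NN_VS hx) hx.1.1.symm.vert
    have done : VS L m p p' = VS L m (v 0) (v 2) → fullC L (VS L m (v 0) (v 2)) = T := fun h =>
      Set.Subset.antisymm hsub fun F hF => ⟨hT.subset hF, fun w hw => h ▸ data_VS hT hF hw⟩
    rcases circ_pos hC (hVS _ left_VS (vvert 0)) (hVS _ (NN_VS hbN) vb) (hVS _ right_VS (vvert 2))
      (hVS _ (NN_VS hdN) vd) with ⟨h1, h2⟩ | ⟨h1, h2⟩ | ⟨h1, h2⟩ | ⟨h1, h2⟩ | ⟨h1, h2, h3, h4⟩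
    · exact done (by rw [h1, h2])
    · exact done (by rw [h1, h2, VS_comm])
    · rw [← h1, ← h2] at hxp; exact absurd hxp hxW
    · rw [← h1, ← h2, VS_comm] at hxp; exact absurd hxp hxW
    · exact (hno p (NN_swap hL h2 h4).1 (NN_swap hL h1 h3).1).elim
  · ext F
    constructor
    · rintro ⟨⟨hF, hF1⟩, -, hF2⟩
      have hF4 : ∀ w ∈ F, (w = v 0 ∨ w = v 2) ∨ (w = v 1 ∨ w = v 3) := by
        intro w hw
        rcases hF1 w hw with h | h | h
        · exact Or.inr (Or.inl h)
        · exact Or.inr (Or.inr h)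
        rcases hF2 w hw with k | k | k
        · exact Or.inl (Or.inl k)
        · exact Or.inl (Or.inr k)
        exact (hno w h k).elim
      have nopair : ∀ p q, p ≠ q → ¬ Adj L p q → p ∈ F → q ∈ F → False := by
        intro p q h1 h2 hp hq
        exact h2 ⟨h1, L.down_closed hF (by
          intro w hw
          rw [Finset.mem_insert, Finset.mem_singleton] at hw
          rcases hw with rfl | rfl <;> assumption) (by simp)⟩
      have h02 := nopair _ _ hC.ac hC.nac
      have h13 := nopair _ _ hC.bd hC.nbd
      have hne := L.nonempty_of_mem_faces hF
      have main : ∃ p q, ((p = v 0 ∨ p = v 2) ∧ (q = v 1 ∨ q = v 3)) ∧ ∀ w ∈ F, w = p ∨ w = q := by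
        by_cases k0 : v 0 ∈ F <;> by_cases k1 : v 1 ∈ F
        · refine ⟨v 0, v 1, ⟨Or.inl rfl, Or.inl rfl⟩, fun w hw => ?_⟩
          rcases hF4 w hw with (h | h) | (h | h)
          · exact Or.inl h
          · rw [h] at hw; exact (h02 k0 hw).elim
          · exact Or.inr h
          · rw [h] at hw; exact (h13 k1 hw).elim
        · refine ⟨v 0, v 3, ⟨Or.inl rfl, Or.inr rfl⟩, fun w hw => ?_⟩
          rcases hF4 w hw with (h | h) | (h | h)
          · exact Or.inl h
          · rw [h] at hw; exact (h02 k0 hw).elim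
          · rw [h] at hw; exact absurd hw k1
          · exact Or.inr h
        · refine ⟨v 2, v 1, ⟨Or.inr rfl, Or.inl rfl⟩, fun w hw => ?_⟩
          rcases hF4 w hw with (h | h) | (h | h)
          · rw [h] at hw; exact absurd hw k0
          · exact Or.inl h
          · exact Or.inr h
          · rw [h] at hw; exact (h13 k1 hw).elim
        · refine ⟨v 2, v 3, ⟨Or.inr rfl, Or.inr rfl⟩, fun w hw => ?_⟩
          rcases hF4 w hw with (h | h) | (h | h)
          · rw [h] at hw; exact absurd hw k0
          · exact Or.inl h
          · rw [h] at hw; exact absurd hw k1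
          · exact Or.inr h
      obtain ⟨p, q, ⟨hp, hq⟩, hall⟩ := main
      rcases sub_pair hall hne with h | h | h
      · rcases hp with rfl | rfl
        · exact Or.inl ⟨0, h⟩
        · exact Or.inl ⟨2, h⟩
      · rcases hq with rfl | rfl
        · exact Or.inl ⟨1, h⟩
        · exact Or.inl ⟨3, h⟩
      · rcases hp with rfl | rfl <;> rcases hq with rfl | rfl
        · exact Or.inr ⟨0, h⟩
        · exact Or.inr ⟨3, h.trans (Finset.pair_comm _ _)⟩
        · exact Or.inr ⟨1, h.trans (Finset.pair_comm _ _)⟩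
        · exact Or.inr ⟨2, h⟩
    · have hm : ∀ i, v i ∈ VS L m (v 1) (v 3) ∧ v i ∈ VS L m (v 0) (v 2) := by
        intro i
        fin_cases i
        · exact ⟨NN_VS haN, left_VS⟩
        · exact ⟨left_VS, NN_VS hbN⟩
        · exact ⟨NN_VS hcN, right_VS⟩
        · exact ⟨right_VS, NN_VS hdN⟩
      have suff : F ∈ L.faces → (∀ w ∈ F, ∃ i, w = v i) →
          F ∈ fullC L (VS L m (v 1) (v 3)) ∩ fullC L (VS L m (v 0) (v 2)) := by
        intro hF h
        refine ⟨⟨hF, fun w hw => ?_⟩, ⟨hF, fun w hw => ?_⟩⟩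
        · obtain ⟨i, rfl⟩ := h w hw
          exact (hm i).1
        · obtain ⟨i, rfl⟩ := h w hw
          exact (hm i).2
      rintro (⟨i, rfl⟩ | ⟨i, rfl⟩)
      · exact suff (vvert i) fun w hw => ⟨i, Finset.mem_singleton.1 hw⟩
      · refine suff (hv.2.1 i) fun w hw => ?_
        rw [Finset.mem_insert, Finset.mem_singleton] at hw
        rcases hw with h | h
        · exact ⟨_, h⟩
        · exact ⟨_, h⟩

theorem final_aux (hL : IsLabeledS2 L m) (hflag : MetricFlag L m)
    {D : Set (Finset E3)} (hD : IsSeifertSubcomplex L m D)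
    {v : Fin 4 → E3} (hv : IsEuclidean4Circuit L m v)
    (hsub : circuitComplex v ⊆ D) {x : E3} (hx : x ∈ NN L m (v 0) (v 2)) :
    ({x} : Finset E3) ∈ D := by
  have hvD : ∀ i, ({v i} : Finset E3) ∈ D := fun i => hsub (Or.inl ⟨i, rfl⟩)
  obtain ⟨S0, hS0, rfl⟩ := hD
  have hC := circ_of_eucl hL hflag hv
  obtain ⟨hSS, hSe⟩ := vs_struct hL hflag hS0
  have hxv : ({x} : Finset E3) ∈ L.faces := hx.1.1.symm.vert
  have hcov : ∀ i, ∃ W, Relation.ReflTransGen (RW L m) (vs S0) W ∧ v i ∈ W := by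
    intro i
    obtain ⟨S, ⟨hS, hE⟩, hm⟩ := hvD i
    exact ⟨vs S, eqv_to_RW hL hflag hE, hm⟩
  obtain ⟨W, hW, hCW⟩ := exists_member hL hC (S := vs S0) (by
    rintro w (rfl | rfl | rfl | rfl) <;> exact hcov _)
  have hWI : IsInfMaxRASusp L m (fullC L W) := class_member (by rw [hSe]; exact hS0) hW
  have hWE := RW_to_eqv hW
  rw [hSe] at hWE
  have hWS : IsS L m W := by
    rcases hW.cases_tail with rfl | ⟨u, _, hu⟩
    · exact hSS
    · exact hu.2.1
  obtain ⟨t, t', htt, hn, rfl, hinf⟩ := hWS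
  by_cases hxW : x ∈ VS L m t t'
  · exact ⟨_, ⟨hWI, hWE⟩, sing_mem.2 ⟨hxv, hxW⟩⟩
  have caseB' : VS L m t t' = VS L m (v 1) (v 3) → ({x} : Finset E3) ∈
      ⋃₀ {S | IsInfMaxRASusp L m S ∧ Relation.EqvGen (SeifertRel L m) S0 S} := by
    intro h
    rw [h] at hWI hWE hxW
    have hR := caseB hL hflag hv hWI hx hxW
    exact ⟨_, ⟨hR.2.1, hWE.trans _ _ _ (.rel _ _ hR)⟩, sing_mem.2 ⟨hxv, NN_VS hx⟩⟩
  rcases circ_pos hC (hCW (by simp)) (hCW (by simp)) (hCW (by simp)) (hCW (by simp)) with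
    ⟨h1, h2⟩ | ⟨h1, h2⟩ | ⟨h1, h2⟩ | ⟨h1, h2⟩ | ⟨h1, h2, h3, h4⟩
  · rw [h1, h2] at hx; exact absurd (NN_VS hx) hxW
  · rw [h1, h2] at hx; rw [VS_comm] at hxW; exact absurd (NN_VS hx) hxW
  · exact caseB' (by rw [h1, h2])
  · exact caseB' (by rw [h1, h2, VS_comm])
  · exfalso
    have xt : x ≠ t := by rintro rfl; exact hxW left_VS
    have xt' : x ≠ t' := by rintro rfl; exact hxW right_VS
    have x1 : x ≠ v 1 := by rintro rfl; exact hxW (NN_VS h2)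
    have x3 : x ≠ v 3 := by rintro rfl; exact hxW (NN_VS h4)
    obtain ⟨e⟩ := hL.sphere
    have m2 : v 2 ∉ ({t, t', v 1, v 3} : Set E3) := by
      simp only [Set.mem_insert_iff, Set.mem_singleton_iff, not_or]
      exact ⟨h3.1.ne.symm, h3.2.ne.symm, hC.bc.ne.symm, hC.cd.ne⟩
    have m0 : v 0 ∉ ({t, t', v 1, v 3} : Set E3) := by
      simp only [Set.mem_insert_iff, Set.mem_singleton_iff, not_or]
      exact ⟨h1.1.ne.symm, h1.2.ne.symm, hC.ab.ne, hC.da.ne.symm⟩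
    have mx : x ∉ ({t, t', v 1, v 3} : Set E3) := by
      simp only [Set.mem_insert_iff, Set.mem_singleton_iff, not_or]
      exact ⟨xt, xt', x1, x3⟩
    refine no_P hL.finite e htt hC.bd h2.1.1 h4.1.1 h3.1.1 h2.2.1 h4.2.1 h3.2.1 hC.ab.1
      hC.da.1.symm hC.bc.ne.symm hC.cd.ne h1.1.ne.symm h1.2.ne.symm ?_ hC.ac.symm
    exact (Relation.ReflTransGen.single ⟨hx.2.1, m2, mx⟩).tail ⟨hx.1.1.symm, mx, m0⟩

end Helpers

/-- Let `D` be a Seifert subcomplex of a metric flag labeled triangulation of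
the 2-sphere and let `C ⊆ D` be a Euclidean 4-circuit on the vertices
`v 0, v 1, v 2, v 3` in cyclic order.  If a vertex `x` of `L` is joined to the
opposite corners `v 0` and `v 2` by edges of `L` labeled `2`, then `x` is a
vertex of `D`. -/
theorem seifert_contains_suspended_vertex
    (L : SimplicialComplex ℝ E3) (m : E3 → E3 → ℕ)
    (hL : IsLabeledS2 L m) (hflag : MetricFlag L m)
    (D : Set (Finset E3)) (hD : IsSeifertSubcomplex L m D)
    (v : Fin 4 → E3) (hv : IsEuclidean4Circuit L m v)
    (hsub : circuitComplex v ⊆ D)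
    (x : E3) (hx : ({x} : Finset E3) ∈ L.faces)
    (hx0 : ({x, v 0} : Finset E3) ∈ L.faces)
    (hx2 : ({x, v 2} : Finset E3) ∈ L.faces)
    (hm0 : m x (v 0) = 2) (hm2 : m x (v 2) = 2) :
    ({x} : Finset E3) ∈ D := by
  by_cases h0 : x = v 0
  · rw [h0]; exact hsub (Or.inl ⟨0, rfl⟩)
  by_cases h2 : x = v 2
  · rw [h2]; exact hsub (Or.inl ⟨2, rfl⟩)
  have a0 : Adj2 L m x (v 0) := ⟨⟨h0, hx0⟩, hm0⟩
  have a2 : Adj2 L m x (v 2) := ⟨⟨h2, hx2⟩, hm2⟩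
  exact final_aux hL hflag hD hv hsub ⟨a0.symm hL, a2.symm hL⟩
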